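/- arXiv:1310.5938 — 3 statements merged into one kernel-verified Lean document; each statement's English description precedes it below -/
import Mathlib

section
/- For every integer n ≥ 1, the double series defining the subelliptic heat kernel h_t(r,φ) on CP^{2n+1} converges absolutely for every t > 0, r ∈ [0, π/2), φ ∈ [0, π/2], and the resulting function satisfies the subelliptic heat equation ∂h/∂t = ∂²h/∂r² + ((4n−1)·cot r − 3·tan r)·∂h/∂r + tan²r·(∂²h/∂φ² + 2·cot 2φ·∂h/∂φ) at every point (t, r, φ) ∈ (0,∞) × (0, π/2) × (0, π/2). -/
open Real MeasureTheory Filter Topology Set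

noncomputable section

/-- The defining formula of the Jacobi polynomial `P_k^{(α,β)}` on `(-1,1)`. -/
def jacobiFormula (k α β : ℕ) (x : ℝ) : ℝ :=
  ((-1 : ℝ) ^ k / (2 ^ k * Nat.factorial k)) * (1 - x) ^ (-(α : ℤ)) * (1 + x) ^ (-(β : ℤ)) *
    iteratedDeriv k (fun y => (1 - y) ^ (α + k) * (1 + y) ^ (β + k)) x

/-- `J k α β` is the Jacobi polynomial `P_k^{(α,β)}`: a polynomial function satisfying the
defining formula on `(-1,1)`. -/
def IsJacobi (J : ℕ → ℕ → ℕ → ℝ → ℝ) : Prop :=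
  ∀ k α β : ℕ, (∃ p : Polynomial ℝ, ∀ x : ℝ, J k α β x = p.eval x) ∧
    ∀ x ∈ Set.Ioo (-1 : ℝ) 1, J k α β x = jacobiFormula k α β x

/-- The vertical factor `sin((m+1)η)/sin η`, extended by its limit `m+1` at `η = 0`. -/
def vertFactor (m : ℕ) (η : ℝ) : ℝ :=
  if η = 0 then (m + 1 : ℝ) else Real.sin ((m + 1) * η) / Real.sin η

/-- The general term of the double series defining the subelliptic heat kernel of the
quaternionic Hopf fibration on `S^{4n+3}`. -/
def pTerm (n : ℕ) (J : ℕ → ℕ → ℕ → ℝ → ℝ) (t r η : ℝ) (mk : ℕ × ℕ) : ℝ :=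
  (Real.Gamma (2 * n) / (2 * Real.pi ^ (2 * n + 2))) *
    (2 * (mk.2 : ℝ) + mk.1 + 2 * n + 1) * ((mk.1 : ℝ) + 1) *
    (Nat.choose (mk.2 + mk.1 + 2 * n) (2 * n - 1) : ℝ) *
    Real.exp (-(4 * ((mk.2 : ℝ) * (mk.2 + 2 * n + mk.1 + 1) + n * mk.1)) * t) *
    vertFactor mk.1 η * Real.cos r ^ mk.1 * J mk.2 (2 * n - 1) (mk.1 + 1) (Real.cos (2 * r))

/-- The subelliptic heat kernel of the quaternionic Hopf fibration on `S^{4n+3}`. -/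
def pKernel (n : ℕ) (J : ℕ → ℕ → ℕ → ℝ → ℝ) (t r η : ℝ) : ℝ :=
  ∑' mk : ℕ × ℕ, pTerm n J t r η mk

/-- The defining formula of the Gegenbauer polynomial `C_m^{2n+1}` on `(-1,1)`. -/
def gegenbauerFormula (n m : ℕ) (x : ℝ) : ℝ :=
  ((-1 : ℝ) ^ m / 2 ^ m) *
    (Real.Gamma ((m : ℝ) + 4 * n + 2) * Real.Gamma (2 * (n : ℝ) + 3 / 2) /
      (Real.Gamma (4 * (n : ℝ) + 2) * Real.Gamma ((m : ℝ) + 1) *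
        Real.Gamma (2 * (n : ℝ) + m + 3 / 2))) *
    (1 - x ^ 2) ^ (-(2 * (n : ℝ) + 1 / 2)) *
    iteratedDeriv m (fun y => (1 - y ^ 2) ^ (2 * (n : ℝ) + m + 1 / 2)) x

/-- `C m` is the Gegenbauer polynomial `C_m^{2n+1}`. -/
def IsGegenbauer (n : ℕ) (C : ℕ → ℝ → ℝ) : Prop :=
  ∀ m : ℕ, (∃ p : Polynomial ℝ, ∀ x : ℝ, C m x = p.eval x) ∧
    ∀ x ∈ Set.Ioo (-1 : ℝ) 1, C m x = gegenbauerFormula n m x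

/-- The Riemannian heat kernel of `S^{4n+3}`. -/
def qKernel (n : ℕ) (C : ℕ → ℝ → ℝ) (t x : ℝ) : ℝ :=
  (Real.Gamma (2 * n + 1) / (2 * Real.pi ^ (2 * n + 2))) *
    ∑' m : ℕ, ((m : ℝ) + 2 * n + 1) * Real.exp (-((m : ℝ) * (m + 4 * n + 2)) * t) * C m x

/-- The general term of the double series defining the subelliptic heat kernel on `CP^{2n+1}`. -/
def hTerm (n : ℕ) (J : ℕ → ℕ → ℕ → ℝ → ℝ) (t r φ : ℝ) (mk : ℕ × ℕ) : ℝ :=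
  (Real.Gamma (2 * n) / (4 * Real.pi ^ (2 * n + 2))) *
    (2 * (mk.2 : ℝ) + 2 * mk.1 + 2 * n + 1) * (2 * (mk.1 : ℝ) + 1) *
    (Nat.choose (mk.2 + 2 * mk.1 + 2 * n) (2 * n - 1) : ℝ) *
    Real.exp (-(4 * (mk.2 : ℝ) * (mk.2 + 2 * n + 2 * mk.1 + 1) + 8 * n * mk.1) * t) *
    Real.cos r ^ (2 * mk.1) * J mk.1 0 0 (Real.cos (2 * φ)) *
    J mk.2 (2 * n - 1) (2 * mk.1 + 1) (Real.cos (2 * r))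

/-- The subelliptic heat kernel of the fibration `CP^1 → CP^{2n+1} → HP^n`. -/
def hKernel (n : ℕ) (J : ℕ → ℕ → ℕ → ℝ → ℝ) (t r φ : ℝ) : ℝ :=
  ∑' mk : ℕ × ℕ, hTerm n J t r φ mk

end

open Polynomial in
theorem aux_iter (k : ℕ) (q : ℝ[X]) (x : ℝ) :
    iteratedDeriv k (fun y => q.eval y) x = (derivative^[k] q).eval x := by
  induction k generalizing q with
  | zero => simp
  | succ k ih =>
    rw [iteratedDeriv_succ', Function.iterate_succ_apply, ← ih]
    congr 1
    funext y
    simp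

open Polynomial in
theorem aux_poly (J : ℕ → ℕ → ℕ → ℝ → ℝ) (hJ : IsJacobi J) (k α β : ℕ) :
    ∃ p : ℝ[X], (∀ x, J k α β x = p.eval x) ∧
      C ((-1 : ℝ) ^ k * (2 ^ k * Nat.factorial k)) * ((1 - X) ^ α * (1 + X) ^ β * p) =
        derivative^[k] ((1 - X) ^ (α + k) * (1 + X) ^ (β + k)) := by
  obtain ⟨⟨p, hp⟩, h⟩ := hJ k α β
  refine ⟨p, hp, ?_⟩
  apply Polynomial.eq_of_infinite_eval_eq
  refine Set.Infinite.mono ?_ (Set.Ioo_infinite (show (-1 : ℝ) < 1 by norm_num))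
  intro x hx
  have h1 := h x hx
  rw [hp x, jacobiFormula] at h1
  have h2 : (fun y : ℝ => (1 - y) ^ (α + k) * (1 + y) ^ (β + k)) =
      fun y => ((1 - X) ^ (α + k) * (1 + X) ^ (β + k) : ℝ[X]).eval y := by
    funext y; simp
  rw [h2, aux_iter] at h1
  have hx1 : (1 - x) ≠ 0 := by have := hx.2; linarith
  have hx2 : (1 + x) ≠ 0 := by have := hx.1; linarith
  have hk : (Nat.factorial k : ℝ) ≠ 0 := by positivity
  have hs : ((-1 : ℝ) ^ k) * (-1) ^ k = 1 := by rw [← mul_pow]; simp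
  simp only [Set.mem_setOf_eq, eval_mul, eval_C, eval_pow, eval_sub, eval_add, eval_one, eval_X, h1]
  rw [zpow_neg, zpow_neg, zpow_natCast, zpow_natCast]
  set z := eval x (derivative^[k] ((1 - X) ^ (α + k) * (1 + X) ^ (β + k) : ℝ[X]))
  field_simp
  have : ((-1 : ℝ) ^ k) ^ 2 = 1 := by rw [sq, hs]
  rw [this]; ring

open Polynomial in
theorem aux_root (k a : ℕ) (c : ℝ) (Q : ℝ[X]) :
    ∃ R : ℝ[X], derivative^[k] ((X - C c) ^ (a + k) * Q) = (X - C c) ^ a * R ∧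
      R.eval c * Nat.factorial a = Nat.factorial (a + k) * Q.eval c := by
  induction k generalizing Q with
  | zero => exact ⟨Q, by simp, by simp; ring⟩
  | succ k ih =>
    obtain ⟨R, h1, h2⟩ := ih (C ((a + k + 1 : ℕ) : ℝ) * Q + (X - C c) * derivative Q)
    refine ⟨R, ?_, ?_⟩
    · rw [Function.iterate_succ_apply, ← h1]
      congr 1
      rw [derivative_mul, derivative_X_sub_C_pow, ← add_assoc]
      simp only [Nat.add_sub_cancel, Nat.cast_add, Nat.cast_one, map_add, map_natCast, map_one]
      ring
    · rw [h2, ← add_assoc, Nat.factorial_succ]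
      simp; ring

open Polynomial in
theorem aux_d2 (k : ℕ) (U : ℝ[X]) :
    derivative^[k + 1] ((1 - X * X) * derivative U) =
      (1 - X * X) * derivative (derivative (derivative^[k] U)) -
      2 * ((k : ℝ[X]) + 1) * X * derivative (derivative^[k] U) -
      (k : ℝ[X]) * ((k : ℝ[X]) + 1) * derivative^[k] U := by
  induction k with
  | zero => simp [derivative_mul]; ring
  | succ k ih =>
    rw [Function.iterate_succ_apply' derivative (k + 1), ih, Function.iterate_succ_apply' derivative k]
    generalize derivative^[k] U = V
    simp [derivative_mul]; ring

open Polynomial in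
theorem aux_d1 (k : ℕ) (a b : ℝ) (U : ℝ[X]) :
    derivative^[k + 1] ((C a - C b * X) * U) =
      (C a - C b * X) * derivative (derivative^[k] U) - ((k : ℝ[X]) + 1) * C b * derivative^[k] U := by
  induction k with
  | zero => simp [derivative_mul]; ring
  | succ k ih =>
    rw [Function.iterate_succ_apply' derivative (k + 1), ih, Function.iterate_succ_apply' derivative k]
    generalize derivative^[k] U = V
    simp [derivative_mul]; ring

open Polynomial in
theorem aux_W (a b : ℕ) : (1 - X * X) * derivative ((1 - X) ^ a * (1 + X) ^ b : ℝ[X]) =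
    (C ((b : ℝ) - a) - C ((a : ℝ) + b) * X) * ((1 - X) ^ a * (1 + X) ^ b) := by
  have h1 : (1 - X) * derivative ((1 - X) ^ a : ℝ[X]) = - (a : ℝ[X]) * (1 - X) ^ a := by
    rcases a with _ | a
    · simp
    · simp [derivative_pow]; ring
  have h2 : (1 + X) * derivative ((1 + X) ^ b : ℝ[X]) = (b : ℝ[X]) * (1 + X) ^ b := by
    rcases b with _ | b
    · simp
    · simp [derivative_pow]; ring
  rw [derivative_mul]
  simp only [map_sub, map_add, map_natCast]
  linear_combination (1 + X) * (1 + X) ^ b * h1 + (1 - X) * (1 - X) ^ a * h2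

open Polynomial in
theorem aux_ode (p : ℝ[X]) (k α β : ℕ) (c : ℝ) (hc : c ≠ 0)
    (h : C c * ((1 - X) ^ α * (1 + X) ^ β * p) =
        derivative^[k] ((1 - X) ^ (α + k) * (1 + X) ^ (β + k))) (x : ℝ) :
    (1 - x ^ 2) * (derivative (derivative p)).eval x +
      ((β : ℝ) - α - (α + β + 2) * x) * (derivative p).eval x +
      (k : ℝ) * (k + α + β + 1) * p.eval x = 0 := by
  have e1 := congrArg (fun q => derivative^[k + 1] q) (aux_W (α + k) (β + k))
  simp only [aux_d2, aux_d1] at e1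
  rw [← h] at e1
  have w1 := aux_W α β
  have hWne : ((1 - X) ^ α * (1 + X) ^ β : ℝ[X]) ≠ 0 := by
    apply mul_ne_zero <;> apply pow_ne_zero
    · intro h0; have := congrArg (eval 0) h0; simp at this
    · intro h0; have := congrArg (eval 0) h0; simp at this
  generalize ((1 - X) ^ α * (1 + X) ^ β : ℝ[X]) = W at *
  have w2 := congrArg derivative w1
  simp only [derivative_mul, derivative_sub, derivative_C, derivative_X, derivative_one,
    zero_mul, zero_add, derivative_add] at e1 w2
  simp only [map_sub, map_add, map_natCast, map_mul, Nat.cast_add] at e1 w1 w2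
  have hX : (1 - X * X : ℝ[X]) ≠ 0 := by
    intro h0; have := congrArg (eval 0) h0; simp at this
  have hC : (C c : ℝ[X]) ≠ 0 := by simpa using hc
  have key : C c * W * ((1 - X * X) * derivative (derivative p) +
      ((β : ℝ[X]) - (α : ℝ[X]) - ((α : ℝ[X]) + (β : ℝ[X]) + 2) * X) * derivative p + (k : ℝ[X]) * ((k : ℝ[X]) + (α : ℝ[X]) + (β : ℝ[X]) + 1) * p) = 0 := by
    generalize derivative (derivative W) = W2 at *
    generalize derivative (derivative p) = p2 at *
    generalize derivative W = W1 at *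
    generalize derivative p = p1 at *

    have : C c * W * ((1 - X * X) * p2 +
      ((β : ℝ[X]) - (α : ℝ[X]) - ((α : ℝ[X]) + (β : ℝ[X]) + 2) * X) * p1 + (k : ℝ[X]) * ((k : ℝ[X]) + (α : ℝ[X]) + (β : ℝ[X]) + 1) * p) = 0 := by
      linear_combination e1 - C c * p * w2 - 2 * C c * p1 * w1
    exact this
  have key2 := (mul_eq_zero.1 key).resolve_left (mul_ne_zero hC hWne)
  have := congrArg (eval x) key2
  simp at this; rw [← this]; ring

open Polynomial in
theorem aux_end1 (p : ℝ[X]) (k α β : ℕ)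
    (h : C ((-1 : ℝ) ^ k * (2 ^ k * Nat.factorial k)) * ((1 - X) ^ α * (1 + X) ^ β * p) =
        derivative^[k] ((1 - X) ^ (α + k) * (1 + X) ^ (β + k))) :
    |p.eval 1| = ((k + α).choose k : ℝ) := by
  obtain ⟨R, h1, h2⟩ := aux_root k α 1 (C ((-1 : ℝ) ^ (α + k)) * (1 + X) ^ (β + k))
  have e : ∀ j : ℕ, (1 - X : ℝ[X]) ^ j = C ((-1 : ℝ) ^ j) * (X - C 1) ^ j := by
    intro j
    rw [C_pow, ← mul_pow]; congr 1; simp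
  rw [e, e] at h
  rw [show C ((-1 : ℝ) ^ (α + k)) * (X - C 1) ^ (α + k) * (1 + X) ^ (β + k) =
    (X - C 1) ^ (α + k) * (C ((-1 : ℝ) ^ (α + k)) * (1 + X) ^ (β + k)) by ring, h1] at h
  have hne : ((X - C 1 : ℝ[X]) ^ α) ≠ 0 := pow_ne_zero _ (X_sub_C_ne_zero 1)
  have h3 : C ((-1 : ℝ) ^ k * (2 ^ k * Nat.factorial k)) * (C ((-1 : ℝ) ^ α) * (1 + X) ^ β * p) = R := by
    apply mul_left_cancel₀ hne
    rw [← h]; ring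
  rw [← h3] at h2
  have h4 := congrArg abs h2
  simp only [eval_mul, eval_C, eval_pow, eval_add, eval_one, eval_X, abs_mul, abs_pow, abs_neg,
    abs_one, one_pow, one_mul, Nat.abs_cast] at h4
  norm_num at h4
  have h5 : ((k + α).choose k : ℝ) * Nat.factorial k * Nat.factorial α = Nat.factorial (α + k) := by
    rw [add_comm α k]; 
    have h6 := Nat.add_choose_mul_factorial_mul_factorial k α
    rw [Nat.choose_symm_add.symm] at h6
    exact_mod_cast h6
  have hk : (0 : ℝ) < Nat.factorial k := by positivity
  have ha : (0 : ℝ) < Nat.factorial α := by positivity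
  have h2p : (0 : ℝ) < 2 ^ (β + k) := by positivity
  have : (2 ^ (β + k) * Nat.factorial k * Nat.factorial α : ℝ) * |p.eval 1| =
      (2 ^ (β + k) * Nat.factorial k * Nat.factorial α : ℝ) * (k + α).choose k := by
    rw [← h5] at h4
    rw [pow_add] at *
    linear_combination h4
  exact mul_left_cancel₀ (by positivity) this

open Polynomial in
theorem aux_end2 (p : ℝ[X]) (k α β : ℕ)
    (h : C ((-1 : ℝ) ^ k * (2 ^ k * Nat.factorial k)) * ((1 - X) ^ α * (1 + X) ^ β * p) =
        derivative^[k] ((1 - X) ^ (α + k) * (1 + X) ^ (β + k))) :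
    |p.eval (-1)| = ((k + β).choose k : ℝ) := by
  obtain ⟨R, h1, h2⟩ := aux_root k β (-1) ((1 - X) ^ (α + k))
  have e : (1 + X : ℝ[X]) = (X - C (-1)) := by simp; ring
  rw [e, mul_comm ((1 - X : ℝ[X]) ^ (α + k)), h1] at h
  have hne : ((X - C (-1) : ℝ[X]) ^ β) ≠ 0 := pow_ne_zero _ (X_sub_C_ne_zero (-1))
  have h3 : C ((-1 : ℝ) ^ k * (2 ^ k * Nat.factorial k)) * ((1 - X) ^ α * p) = R := by
    apply mul_left_cancel₀ hne
    rw [← h]; ring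
  rw [← h3] at h2
  have h4 := congrArg abs h2
  simp only [eval_mul, eval_C, eval_pow, eval_sub, eval_one, eval_X, abs_mul, abs_pow, abs_neg,
    abs_one, one_pow, one_mul, Nat.abs_cast] at h4
  norm_num at h4
  have h5 : ((k + β).choose k : ℝ) * Nat.factorial k * Nat.factorial β = Nat.factorial (β + k) := by
    rw [add_comm β k]; 
    have h6 := Nat.add_choose_mul_factorial_mul_factorial k β
    rw [Nat.choose_symm_add.symm] at h6
    exact_mod_cast h6
  have : (2 ^ (α + k) * Nat.factorial k * Nat.factorial β : ℝ) * |p.eval (-1)| =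
      (2 ^ (α + k) * Nat.factorial k * Nat.factorial β : ℝ) * (k + β).choose k := by
    rw [← h5] at h4
    rw [pow_add] at *
    linear_combination h4
  exact mul_left_cancel₀ (by positivity) this

open Polynomial in
theorem aux_energy (p : ℝ[X]) (a b l B : ℝ) (ha : 0 ≤ a) (hb : 0 ≤ b)
    (ode : ∀ x : ℝ, (1 - x ^ 2) * (derivative (derivative p)).eval x +
      (b - a - (a + b + 2) * x) * (derivative p).eval x + l * p.eval x = 0)
    (h1 : l * p.eval 1 ^ 2 ≤ B) (h2 : l * p.eval (-1) ^ 2 ≤ B) (x : ℝ) (hx : x ∈ Icc (-1 : ℝ) 1) :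
    l * p.eval x ^ 2 + (1 - x ^ 2) * (derivative p).eval x ^ 2 ≤ B := by
  set G : ℝ → ℝ := fun x => l * p.eval x ^ 2 + (1 - x ^ 2) * (derivative p).eval x ^ 2 with hG
  have hd : ∀ y, HasDerivAt G (2 * (derivative p).eval y ^ 2 * ((a - b) + (a + b + 1) * y)) y := by
    intro y
    have d1 := p.hasDerivAt y
    have d2 := (derivative p).hasDerivAt y
    have d3 : HasDerivAt (fun x : ℝ => 1 - x ^ 2) (-(2 * y)) y := by
      simpa using (hasDerivAt_pow 2 y).const_sub 1
    have := ((d1.pow 2).const_mul l).add (d3.mul (d2.pow 2))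
    convert! this using 1
    simp
    linear_combination (-2 * (derivative p).eval y) * ode y
  have hab : 0 < a + b + 1 := by linarith
  set x0 := (b - a) / (a + b + 1) with hx0
  have hx0' : (a + b + 1) * x0 = b - a := by rw [hx0]; field_simp
  have hcont : Continuous G := continuous_iff_continuousAt.2 fun y => (hd y).continuousAt
  rcases le_total x x0 with hle | hle
  · have hA : AntitoneOn G (Iic x0) := by
      apply antitoneOn_of_deriv_nonpos (convex_Iic _) hcont.continuousOn
        (fun y _ => (hd y).differentiableAt.differentiableWithinAt)
      intro y hy
      rw [interior_Iic] at hy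
      rw [(hd y).deriv]
      apply mul_nonpos_of_nonneg_of_nonpos (by positivity)
      have : (a + b + 1) * y ≤ (a + b + 1) * x0 := mul_le_mul_of_nonneg_left (le_of_lt hy) hab.le
      linarith
    have := hA (show (-1 : ℝ) ∈ Iic x0 from hx.1.trans hle) hle hx.1
    refine this.trans ?_
    simp only [hG]; norm_num; exact h2
  · have hA : MonotoneOn G (Ici x0) := by
      apply monotoneOn_of_deriv_nonneg (convex_Ici _) hcont.continuousOn
        (fun y _ => (hd y).differentiableAt.differentiableWithinAt)
      intro y hy
      rw [interior_Ici] at hy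
      rw [(hd y).deriv]
      apply mul_nonneg (by positivity)
      have : (a + b + 1) * x0 ≤ (a + b + 1) * y := mul_le_mul_of_nonneg_left (le_of_lt hy) hab.le
      linarith
    have := hA hle (show (1 : ℝ) ∈ Ici x0 from hle.trans hx.2) hx.2
    refine this.trans ?_
    simp only [hG]; norm_num; exact h1

open Polynomial in
theorem aux_main (J : ℕ → ℕ → ℕ → ℝ → ℝ) (hJ : IsJacobi J) (k α β : ℕ) :
    ∃ p : ℝ[X], (∀ x, J k α β x = p.eval x) ∧
      (∀ x : ℝ, (1 - x ^ 2) * (derivative (derivative p)).eval x +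
      ((β : ℝ) - α - (α + β + 2) * x) * (derivative p).eval x +
      (k : ℝ) * (k + α + β + 1) * p.eval x = 0) ∧
      ∀ M : ℝ, ((k + α).choose k : ℝ) ≤ M → ((k + β).choose k : ℝ) ≤ M → ∀ x ∈ Icc (-1 : ℝ) 1,
        |p.eval x| ≤ M ∧ (1 - x ^ 2) * (derivative p).eval x ^ 2 ≤ (k : ℝ) * (k + α + β + 1) * M ^ 2 := by
  obtain ⟨p, hp, h⟩ := aux_poly J hJ k α β
  have ode := aux_ode p k α β _ (by positivity) h
  refine ⟨p, hp, ode, ?_⟩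
  intro M h1 h2 x hx
  have hM : 0 ≤ M := le_trans (by positivity) h1
  have e1 := aux_end1 p k α β h
  have e2 := aux_end2 p k α β h
  have hl : (0 : ℝ) ≤ (k : ℝ) * (k + α + β + 1) := by positivity
  have b1 : p.eval 1 ^ 2 ≤ M ^ 2 := by rw [← sq_abs, e1]; gcongr
  have b2 : p.eval (-1) ^ 2 ≤ M ^ 2 := by rw [← sq_abs, e2]; gcongr
  have en := aux_energy p α β _ ((k : ℝ) * (k + α + β + 1) * M ^ 2) (by positivity) (by positivity) ode
    (mul_le_mul_of_nonneg_left b1 hl) (mul_le_mul_of_nonneg_left b2 hl) x hx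
  have hx2 : 0 ≤ 1 - x ^ 2 := by nlinarith [hx.1, hx.2]
  have n1 : 0 ≤ (k : ℝ) * (k + α + β + 1) * p.eval x ^ 2 := by positivity
  have n2 : 0 ≤ (1 - x ^ 2) * (derivative p).eval x ^ 2 := by positivity
  refine ⟨?_, by linarith⟩
  rcases Nat.eq_zero_or_pos k with rfl | hk
  · have hWne : ((1 - X) ^ α * (1 + X) ^ β : ℝ[X]) ≠ 0 := by
      apply mul_ne_zero <;> apply pow_ne_zero
      · intro h0; have := congrArg (eval 0) h0; simp at this
      · intro h0; have := congrArg (eval 0) h0; simp at this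
    have : p = 1 := by
      apply mul_left_cancel₀ hWne
      simpa using h
    rw [this]; simpa using h1
  · have hlp : (0 : ℝ) < (k : ℝ) * (k + α + β + 1) := by positivity
    refine abs_le_of_sq_le_sq ?_ hM
    have : (k : ℝ) * (k + α + β + 1) * p.eval x ^ 2 ≤ (k : ℝ) * (k + α + β + 1) * M ^ 2 := by linarith
    exact le_of_mul_le_mul_left this hlp

theorem aux_series2 {ι : Type*} (f f' f'' : ι → ℝ → ℝ) (u : ι → ℝ) (hu : Summable u) (s : Set ℝ)
    (hs : IsOpen s) (hc : IsPreconnected s)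
    (h1 : ∀ i, ∀ x ∈ s, HasDerivAt (f i) (f' i x) x)
    (h2 : ∀ i, ∀ x ∈ s, HasDerivAt (f' i) (f'' i x) x)
    (b0 : ∀ i, ∀ x ∈ s, |f i x| ≤ u i) (b1 : ∀ i, ∀ x ∈ s, |f' i x| ≤ u i)
    (b2 : ∀ i, ∀ x ∈ s, |f'' i x| ≤ u i) (x : ℝ) (hx : x ∈ s) :
    deriv (fun y => ∑' i, f i y) x = ∑' i, f' i x ∧
    iteratedDeriv 2 (fun y => ∑' i, f i y) x = ∑' i, f'' i x ∧
    Summable (fun i => f' i x) ∧ Summable (fun i => f'' i x) := by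
  have d1 : ∀ y ∈ s, HasDerivAt (fun y => ∑' i, f i y) (∑' i, f' i y) y := fun y hy =>
    hasDerivAt_tsum_of_isPreconnected hu hs hc h1 b1 hx
      (Summable.of_norm_bounded hu fun i => b0 i x hx) hy
  have d2 : HasDerivAt (fun y => ∑' i, f' i y) (∑' i, f'' i x) x :=
    hasDerivAt_tsum_of_isPreconnected hu hs hc h2 b2 hx
      (Summable.of_norm_bounded hu fun i => b1 i x hx) hx
  refine ⟨(d1 x hx).deriv, ?_, Summable.of_norm_bounded hu fun i => b1 i x hx,
    Summable.of_norm_bounded hu fun i => b2 i x hx⟩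
  rw [iteratedDeriv_succ, iteratedDeriv_one]
  have : deriv (fun y => ∑' i, f i y) =ᶠ[𝓝 x] fun y => ∑' i, f' i y := by
    filter_upwards [hs.mem_nhds hx] with y hy using (d1 y hy).deriv
  rw [this.deriv_eq, d2.deriv]

theorem aux_loc (g : ℝ → ℝ) (x : ℝ) (hg : ContinuousAt g x) (s : Set ℝ) (hs : s ∈ 𝓝 x) :
    ∃ K : ℝ, 0 ≤ K ∧ ∃ δ > 0, ∀ y ∈ Ioo (x - δ) (x + δ), y ∈ s ∧ |g y| ≤ K := by
  have h1 : ∀ᶠ y in 𝓝 x, |g y| < |g x| + 1 :=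
    hg.abs.eventually (gt_mem_nhds (by linarith))
  have h2 := h1.and hs
  obtain ⟨δ, hδ, h⟩ := Metric.eventually_nhds_iff_ball.1 h2
  refine ⟨|g x| + 1, by positivity, δ, hδ, fun y hy => ?_⟩
  rw [← Real.ball_eq_Ioo] at hy
  exact ⟨(h y hy).2, (h y hy).1.le⟩

/-- Separated solutions. -/
theorem aux_pde {ι : Type*} (c l μ a b : ι → ℝ) (A A' A'' B B' B'' : ι → ℝ → ℝ) (p q w : ℝ → ℝ)
    (S T : Set ℝ) (hS : IsOpen S) (hT : IsOpen T)
    (hl : ∀ i, 0 ≤ l i) (hμ : ∀ i, 0 ≤ μ i)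
    (hA : ∀ i x, HasDerivAt (A i) (A' i x) x) (hA' : ∀ i x, HasDerivAt (A' i) (A'' i x) x)
    (hB : ∀ i x, HasDerivAt (B i) (B' i x) x) (hB' : ∀ i x, HasDerivAt (B' i) (B'' i x) x)
    (bA : ∀ i x, |A i x| ≤ a i) (bA' : ∀ i x, |A' i x| ≤ a i)
    (bB : ∀ i x, |B i x| ≤ b i) (bB' : ∀ i x, |B' i x| ≤ b i)
    (oA : ∀ i, ∀ x ∈ S, A'' i x = - p x * A' i x + (q x * μ i - l i) * A i x)
    (oB : ∀ i, ∀ x ∈ T, B'' i x = - w x * B' i x - μ i * B i x)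
    (cp : ContinuousOn p S) (cq : ContinuousOn q S) (cw : ContinuousOn w T)
    (hsum : ∀ t : ℝ, 0 < t → Summable fun i => |c i| * rexp (-l i * t) * (1 + l i + μ i) * a i * b i)
    (t r φ : ℝ) (ht : 0 < t) (hr : r ∈ S) (hφ : φ ∈ T) :
    deriv (fun s => ∑' i, c i * rexp (-l i * s) * A i r * B i φ) t =
      iteratedDeriv 2 (fun ρ => ∑' i, c i * rexp (-l i * t) * A i ρ * B i φ) r +
      p r * deriv (fun ρ => ∑' i, c i * rexp (-l i * t) * A i ρ * B i φ) r +
      q r * (iteratedDeriv 2 (fun e => ∑' i, c i * rexp (-l i * t) * A i r * B i e) φ +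
        w φ * deriv (fun e => ∑' i, c i * rexp (-l i * t) * A i r * B i e) φ) := by
  have a0 : ∀ i, 0 ≤ a i := fun i => (abs_nonneg _).trans (bA i 0)
  have b0 : ∀ i, 0 ≤ b i := fun i => (abs_nonneg _).trans (bB i 0)
  have hT1 : deriv (fun s => ∑' i, c i * rexp (-l i * s) * A i r * B i φ) t =
      ∑' i, c i * (rexp (-l i * t) * (-l i)) * A i r * B i φ := by
    refine HasDerivAt.deriv ?_
    refine hasDerivAt_tsum_of_isPreconnected (t := Ioi (t / 2)) (y₀ := t)
      (g := fun i s => c i * rexp (-l i * s) * A i r * B i φ)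
      (g' := fun i s => c i * (rexp (-l i * s) * (-l i)) * A i r * B i φ)
      (hsum (t / 2) (by linarith)) isOpen_Ioi isPreconnected_Ioi ?_ ?_
      (show t / 2 < t by linarith) ?_ (show t / 2 < t by linarith)
    · intro i y _
      have : HasDerivAt (fun s => rexp (-l i * s)) (rexp (-l i * y) * (-l i)) y := by
        simpa using ((hasDerivAt_id y).const_mul (-l i)).exp
      exact ((this.const_mul (c i)).mul_const _).mul_const _
    · intro i y hy
      have hy : t / 2 < y := hy
      have := hl i
      have := hμ i
      have := a0 i
      simp only [norm_mul, Real.norm_eq_abs, abs_neg, Real.abs_exp, abs_of_nonneg (hl i)]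
      calc |c i| * (rexp (-l i * y) * l i) * |A i r| * |B i φ|
          ≤ |c i| * (rexp (-l i * (t / 2)) * (1 + l i + μ i)) * a i * b i := by
            gcongr ?_ * (?_ * ?_) * ?_ * ?_
            · exact Real.exp_le_exp.2 (by nlinarith)
            · linarith
            · exact bA i r
            · exact bB i φ
        _ = _ := by ring
    · refine Summable.of_norm_bounded (hsum t ht) fun i => ?_
      have := hl i
      have := hμ i
      have := a0 i
      simp only [norm_mul, Real.norm_eq_abs, Real.abs_exp]
      gcongr ?_ * ?_ * ?_
      · exact le_mul_of_one_le_right (by positivity) (by linarith)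
      · exact bA i r
      · exact bB i φ
  obtain ⟨K1, hK1, δ1, hδ1, hr1⟩ := aux_loc (fun x => |p x| + |q x|) r
    ((cp.continuousAt (hS.mem_nhds hr)).abs.add (cq.continuousAt (hS.mem_nhds hr)).abs) S
    (hS.mem_nhds hr)
  obtain ⟨K2, hK2, δ2, hδ2, hφ2⟩ := aux_loc w φ (cw.continuousAt (hT.mem_nhds hφ)) T (hT.mem_nhds hφ)
  obtain ⟨e1, e2, s1, s2⟩ := aux_series2
    (fun i ρ => c i * rexp (-l i * t) * A i ρ * B i φ)
    (fun i ρ => c i * rexp (-l i * t) * A' i ρ * B i φ)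
    (fun i ρ => c i * rexp (-l i * t) * A'' i ρ * B i φ)
    (fun i => (K1 + 1) * (|c i| * rexp (-l i * t) * (1 + l i + μ i) * a i * b i))
    ((hsum t ht).mul_left _) (Ioo (r - δ1) (r + δ1)) isOpen_Ioo isPreconnected_Ioo
    (fun i x _ => ((hA i x).const_mul _).mul_const _)
    (fun i x _ => ((hA' i x).const_mul _).mul_const _)
    (by
      intro i x hx
      have h3 : |A i x| ≤ (K1 + 1) * ((1 + l i + μ i) * a i) := by
        have := bA i x
        nlinarith [hl i, hμ i, a0 i, mul_nonneg hK1 (a0 i), mul_nonneg (hl i) (a0 i), mul_nonneg (hμ i) (a0 i), mul_nonneg hK1 (mul_nonneg (hl i) (a0 i)), mul_nonneg hK1 (mul_nonneg (hμ i) (a0 i))]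
      simp only [abs_mul, Real.abs_exp]
      calc _ ≤ |c i| * rexp (-l i * t) * ((K1 + 1) * ((1 + l i + μ i) * a i)) * b i := by
            gcongr
            · have := hl i; have := hμ i; have := a0 i; positivity
            · exact bB i φ
        _ = _ := by ring)
    (by
      intro i x hx
      have h3 : |A' i x| ≤ (K1 + 1) * ((1 + l i + μ i) * a i) := by
        have := bA' i x
        nlinarith [hl i, hμ i, a0 i, mul_nonneg hK1 (a0 i), mul_nonneg (hl i) (a0 i), mul_nonneg (hμ i) (a0 i), mul_nonneg hK1 (mul_nonneg (hl i) (a0 i)), mul_nonneg hK1 (mul_nonneg (hμ i) (a0 i))]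
      simp only [abs_mul, Real.abs_exp]
      calc _ ≤ |c i| * rexp (-l i * t) * ((K1 + 1) * ((1 + l i + μ i) * a i)) * b i := by
            gcongr
            · have := hl i; have := hμ i; have := a0 i; positivity
            · exact bB i φ
        _ = _ := by ring)
    (by
      intro i x hx
      have h3 : |A'' i x| ≤ (K1 + 1) * ((1 + l i + μ i) * a i) := by
        obtain ⟨hxS, hxK⟩ := hr1 x hx
        rw [abs_of_nonneg (by positivity)] at hxK
        rw [oA i x hxS]
        have hp : |p x| ≤ K1 := by linarith [abs_nonneg (q x)]
        have hq : |q x| ≤ K1 := by linarith [abs_nonneg (p x)]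
        have t1 : |p x * A' i x| ≤ K1 * a i := by
          rw [abs_mul]; exact mul_le_mul hp (bA' i x) (abs_nonneg _) hK1
        have t2 : |(q x * μ i - l i) * A i x| ≤ (K1 * μ i + l i) * a i := by
          rw [abs_mul]
          refine mul_le_mul ?_ (bA i x) (abs_nonneg _) (by have := hl i; have := hμ i; positivity)
          refine (abs_sub _ _).trans ?_
          rw [abs_mul, abs_of_nonneg (hμ i), abs_of_nonneg (hl i)]
          have := hμ i
          gcongr
        have t3 := abs_add_le (- p x * A' i x) ((q x * μ i - l i) * A i x)
        rw [neg_mul, abs_neg] at t3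
        rw [neg_mul]
        nlinarith [hl i, hμ i, a0 i, mul_nonneg hK1 (a0 i), mul_nonneg (hl i) (a0 i), mul_nonneg (hμ i) (a0 i), mul_nonneg hK1 (mul_nonneg (hl i) (a0 i)), mul_nonneg hK1 (mul_nonneg (hμ i) (a0 i))]
      simp only [abs_mul, Real.abs_exp]
      calc _ ≤ |c i| * rexp (-l i * t) * ((K1 + 1) * ((1 + l i + μ i) * a i)) * b i := by
            gcongr
            · have := hl i; have := hμ i; have := a0 i; positivity
            · exact bB i φ
        _ = _ := by ring)
    r ⟨by linarith, by linarith⟩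
  obtain ⟨e3, e4, s3, s4⟩ := aux_series2
    (fun i e => c i * rexp (-l i * t) * A i r * B i e)
    (fun i e => c i * rexp (-l i * t) * A i r * B' i e)
    (fun i e => c i * rexp (-l i * t) * A i r * B'' i e)
    (fun i => (K2 + 1) * (|c i| * rexp (-l i * t) * (1 + l i + μ i) * a i * b i))
    ((hsum t ht).mul_left _) (Ioo (φ - δ2) (φ + δ2)) isOpen_Ioo isPreconnected_Ioo
    (fun i x _ => ((hB i x).const_mul _))
    (fun i x _ => ((hB' i x).const_mul _))
    (by
      intro i x hx
      have h3 : |B i x| ≤ (K2 + 1) * ((1 + l i + μ i) * b i) := by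
        have := bB i x
        nlinarith [hl i, hμ i, b0 i, mul_nonneg hK2 (b0 i), mul_nonneg (hl i) (b0 i), mul_nonneg (hμ i) (b0 i), mul_nonneg hK2 (mul_nonneg (hl i) (b0 i)), mul_nonneg hK2 (mul_nonneg (hμ i) (b0 i))]
      simp only [abs_mul, Real.abs_exp]
      calc _ ≤ |c i| * rexp (-l i * t) * a i * ((K2 + 1) * ((1 + l i + μ i) * b i)) := by
            have := a0 i
            gcongr
            exact bA i r
        _ = _ := by ring)
    (by
      intro i x hx
      have h3 : |B' i x| ≤ (K2 + 1) * ((1 + l i + μ i) * b i) := by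
        have := bB' i x
        nlinarith [hl i, hμ i, b0 i, mul_nonneg hK2 (b0 i), mul_nonneg (hl i) (b0 i), mul_nonneg (hμ i) (b0 i), mul_nonneg hK2 (mul_nonneg (hl i) (b0 i)), mul_nonneg hK2 (mul_nonneg (hμ i) (b0 i))]
      simp only [abs_mul, Real.abs_exp]
      calc _ ≤ |c i| * rexp (-l i * t) * a i * ((K2 + 1) * ((1 + l i + μ i) * b i)) := by
            have := a0 i
            gcongr
            exact bA i r
        _ = _ := by ring)
    (by
      intro i x hx
      have h3 : |B'' i x| ≤ (K2 + 1) * ((1 + l i + μ i) * b i) := by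
        obtain ⟨hxT, hxK⟩ := hφ2 x hx
        rw [oB i x hxT]
        have t1 : |w x * B' i x| ≤ K2 * b i := by
          rw [abs_mul]; exact mul_le_mul hxK (bB' i x) (abs_nonneg _) hK2
        have t2 : |μ i * B i x| ≤ μ i * b i := by
          rw [abs_mul, abs_of_nonneg (hμ i)]
          exact mul_le_mul_of_nonneg_left (bB i x) (hμ i)
        have t3 := abs_sub (- w x * B' i x) (μ i * B i x)
        rw [neg_mul, abs_neg] at t3
        rw [neg_mul]
        nlinarith [hl i, hμ i, b0 i, mul_nonneg hK2 (b0 i), mul_nonneg (hl i) (b0 i), mul_nonneg (hμ i) (b0 i), mul_nonneg hK2 (mul_nonneg (hl i) (b0 i)), mul_nonneg hK2 (mul_nonneg (hμ i) (b0 i))]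
      simp only [abs_mul, Real.abs_exp]
      calc _ ≤ |c i| * rexp (-l i * t) * a i * ((K2 + 1) * ((1 + l i + μ i) * b i)) := by
            have := a0 i
            gcongr
            exact bA i r
        _ = _ := by ring)
    φ ⟨by linarith, by linarith⟩
  rw [hT1, e1, e2, e3, e4, ← tsum_mul_left, ← s2.tsum_add (s1.mul_left _), ← tsum_mul_left,
    ← s4.tsum_add (s3.mul_left _), ← tsum_mul_left,
    ← (s2.add (s1.mul_left _)).tsum_add ((s4.add (s3.mul_left _)).mul_left _)]
  congr 1
  funext i
  rw [oA i r hr, oB i φ hφ]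
  ring

theorem aux_summ (n : ℕ) (hn : 1 ≤ n) (P : ℕ) (t : ℝ) (ht : 0 < t) :
    Summable fun mk : ℕ × ℕ => ((mk.2 : ℝ) + 2 * mk.1 + 2 * n + 1) ^ P *
      ((mk.2 : ℝ) + 2 * mk.1 + 2 * n + 1) ^ mk.2 *
      rexp (-(4 * (mk.2 : ℝ) * (mk.2 + 2 * n + 2 * mk.1 + 1) + 8 * n * mk.1) * t) := by
  have hgeo : Summable fun k : ℕ => rexp (-t * k) := by
    have : Summable fun k : ℕ => (rexp (-t)) ^ k :=
      summable_geometric_of_lt_one (Real.exp_pos _).le (by rw [Real.exp_lt_one_iff]; linarith)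
    refine this.congr fun k => ?_
    rw [← Real.exp_nat_mul]; ring_nf
  have hprod : Summable fun mk : ℕ × ℕ => rexp (-t * mk.1) * rexp (-t * mk.2) :=
    hgeo.mul_of_nonneg hgeo (fun _ => (Real.exp_pos _).le) (fun _ => (Real.exp_pos _).le)
  set D : ℝ := 1 / (2 * t) with hD
  have hDpos : 0 < D := by positivity
  refine Summable.of_nonneg_of_le (fun mk => by positivity) (fun mk => ?_)
    (hprod.mul_left ((Nat.factorial P : ℝ) / t ^ P * rexp (t * (2 * n + 1) + (D + 2 * t) ^ 2 / (8 * t))))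
  obtain ⟨m, k⟩ := mk
  simp only
  set N : ℝ := (k : ℝ) + 2 * m + 2 * n + 1 with hN
  have hN0 : 0 < N := by positivity
  have h1 : N ^ P ≤ (Nat.factorial P : ℝ) / t ^ P * rexp (t * N) := by
    have := Real.pow_div_factorial_le_exp (x := t * N) (by positivity) P
    rw [div_le_iff₀ (by positivity), mul_pow] at this
    rw [div_mul_eq_mul_div, le_div_iff₀ (by positivity)]
    linarith
  have h2 : N ^ k ≤ rexp (D * k) * rexp (2 * t * N * k) := by
    have a1 : N ≤ D * rexp (2 * t * N) := by
      have := Real.add_one_le_exp (2 * t * N)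
      rw [hD, div_mul_eq_mul_div, le_div_iff₀ (by positivity)]
      linarith
    have a2 : D ≤ rexp D := by have := Real.add_one_le_exp D; linarith
    calc N ^ k ≤ (rexp D * rexp (2 * t * N)) ^ k := by
          gcongr
          exact a1.trans (by gcongr)
      _ = _ := by
          rw [← Real.exp_add, ← Real.exp_nat_mul, ← Real.exp_add]; ring_nf
  calc _ ≤ ((Nat.factorial P : ℝ) / t ^ P * rexp (t * N)) * (rexp (D * k) * rexp (2 * t * N * k)) *
        rexp (-(4 * (k : ℝ) * (k + 2 * n + 2 * m + 1) + 8 * n * m) * t) := by gcongr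
    _ = (Nat.factorial P : ℝ) / t ^ P * rexp (t * N + D * k + 2 * t * N * k +
        -(4 * (k : ℝ) * (k + 2 * n + 2 * m + 1) + 8 * n * m) * t) := by
        rw [Real.exp_add, Real.exp_add, Real.exp_add]; ring
    _ ≤ (Nat.factorial P : ℝ) / t ^ P * rexp (t * (2 * n + 1) + (D + 2 * t) ^ 2 / (8 * t) +
        -t * m + -t * k) := by
        refine mul_le_mul_of_nonneg_left (Real.exp_le_exp.2 ?_) (by positivity)
        have e1 : (k : ℝ) + 2 * n + 2 * m + 1 = N := by rw [hN]; ring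
        rw [e1]
        have e2 : (D + 2 * t) * k - 2 * t * k ^ 2 ≤ (D + 2 * t) ^ 2 / (8 * t) := by
          rw [le_div_iff₀ (by positivity)]
          nlinarith [sq_nonneg (D + 2 * t - 4 * t * k)]
        have e3 : 0 ≤ t * k * (2 * m + 2 * n + 1) := by positivity
        have hn' : (1 : ℝ) ≤ n := by exact_mod_cast hn
        have e4 : 0 ≤ t * m * ((n : ℝ) - 1) := by
          have : 0 ≤ (n : ℝ) - 1 := by linarith
          positivity
        have e5 : 0 ≤ t * m := by positivity
        have e6 : t * N * k = t * k * (2 * m + 2 * n + 1) + t * k ^ 2 := by rw [hN]; ring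
        have e7 : t * N = t * k + 2 * (t * m) + t * (2 * n + 1) := by rw [hN]; ring
        nlinarith
    _ = _ := by
        rw [Real.exp_add, Real.exp_add]; ring

theorem aux_cos (m : ℕ) : ∃ u1 u2 : ℝ → ℝ,
    (∀ x, HasDerivAt (fun x => cos x ^ (2 * m)) (u1 x) x) ∧ (∀ x, HasDerivAt u1 (u2 x) x) ∧
    (∀ x, |u1 x| ≤ 2 * m) ∧
    (∀ x, cos x * u1 x = - (2 * m) * sin x * cos x ^ (2 * m)) ∧
    (∀ x, cos x ^ 2 * u2 x = ((4 * m ^ 2 - 2 * m) * sin x ^ 2 - 2 * m * cos x ^ 2) * cos x ^ (2 * m)) := by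
  rcases m with _ | m
  · refine ⟨fun _ => 0, fun _ => 0, ?_, ?_, ?_, ?_, ?_⟩ <;> intro x <;> simp
    · exact hasDerivAt_const _ _
    · exact hasDerivAt_const _ _
  · refine ⟨fun x => -(2 * (m + 1 : ℝ)) * (cos x ^ (2 * m + 1) * sin x),
      fun x => -(2 * (m + 1 : ℝ)) * (-(2 * m + 1) * cos x ^ (2 * m) * sin x * sin x +
        cos x ^ (2 * m + 1) * cos x), ?_, ?_, ?_, ?_, ?_⟩ <;> intro x
    · have := (hasDerivAt_cos x).pow (2 * (m + 1))
      convert! this using 1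
      rw [show 2 * (m + 1) - 1 = 2 * m + 1 by omega]
      push_cast; ring
    · have := (((hasDerivAt_cos x).pow (2 * m + 1)).mul (hasDerivAt_sin x)).const_mul (-(2 * (m + 1 : ℝ)))
      convert! this using 1
      simp only [Pi.pow_apply, Nat.add_sub_cancel]
      push_cast
      ring
    · rw [abs_mul, abs_neg, abs_of_nonneg (by positivity), abs_mul, abs_pow]
      push_cast
      have h1 : |cos x| ^ (2 * m + 1) ≤ 1 := pow_le_one₀ (abs_nonneg _) (abs_cos_le_one x)
      have h2 := abs_sin_le_one x
      have h3 : |cos x| ^ (2 * m + 1) * |sin x| ≤ 1 := mul_le_one₀ h1 (abs_nonneg _) h2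
      have : (0 : ℝ) ≤ 2 * (m + 1) := by positivity
      nlinarith
    · push_cast; ring
    · push_cast; ring

theorem aux_g (J : ℕ → ℕ → ℕ → ℝ → ℝ) (hJ : IsJacobi J) (k α β : ℕ) : ∃ g1 g2 : ℝ → ℝ,
    (∀ x, HasDerivAt (fun x => J k α β (cos (2 * x))) (g1 x) x) ∧ (∀ x, HasDerivAt g1 (g2 x) x) ∧
    (∀ x, sin (2 * x) * (g2 x + 4 * ((k : ℝ) * (k + α + β + 1)) * J k α β (cos (2 * x))) =
      2 * g1 x * ((β : ℝ) - α - (α + β + 1) * cos (2 * x))) ∧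
    ∀ M : ℝ, ((k + α).choose k : ℝ) ≤ M → ((k + β).choose k : ℝ) ≤ M → ∀ x,
      |J k α β (cos (2 * x))| ≤ M ∧ |g1 x| ≤ 2 * (k + α + β + 1) * M := by
  obtain ⟨p, hp, ode, bd⟩ := aux_main J hJ k α β
  have hc : ∀ x : ℝ, HasDerivAt (fun x => cos (2 * x)) (-2 * sin (2 * x)) x := by
    intro x
    have := ((hasDerivAt_id x).const_mul 2).cos
    convert! this using 1
    simp; ring
  have hs : ∀ x : ℝ, HasDerivAt (fun x => sin (2 * x)) (2 * cos (2 * x)) x := by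
    intro x
    have := ((hasDerivAt_id x).const_mul 2).sin
    convert! this using 1
    simp; ring
  have hcs : ∀ x : ℝ, 1 - cos (2 * x) ^ 2 = sin (2 * x) ^ 2 := fun x => by
    rw [Real.sin_sq]
  refine ⟨fun x => p.derivative.eval (cos (2 * x)) * (-2 * sin (2 * x)),
    fun x => p.derivative.derivative.eval (cos (2 * x)) * (-2 * sin (2 * x)) * (-2 * sin (2 * x)) +
      p.derivative.eval (cos (2 * x)) * (-2 * (2 * cos (2 * x))), ?_, ?_, ?_, ?_⟩
  · intro x
    have := (p.hasDerivAt (cos (2 * x))).comp x (hc x)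
    convert! this using 1
    funext y; simp [hp]
  · intro x
    exact ((p.derivative.hasDerivAt (cos (2 * x))).comp x (hc x)).mul ((hs x).const_mul (-2))
  · intro x
    have := ode (cos (2 * x))
    rw [hcs] at this
    rw [hp]
    linear_combination 4 * sin (2 * x) * this
  · intro M h1 h2 x
    have hM : 0 ≤ M := le_trans (by positivity) h1
    obtain ⟨b1, b2⟩ := bd M h1 h2 (cos (2 * x)) ⟨neg_one_le_cos _, cos_le_one _⟩
    refine ⟨by rwa [hp], ?_⟩
    refine abs_le_of_sq_le_sq ?_ (by positivity)
    rw [hcs] at b2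
    have : (k : ℝ) * (k + α + β + 1) ≤ (k + α + β + 1) ^ 2 := by
      rw [sq]; gcongr
      have : (0 : ℝ) ≤ α + β + 1 := by positivity
      linarith
    have h3 : (k : ℝ) * (k + α + β + 1) * M ^ 2 ≤ (k + α + β + 1) ^ 2 * M ^ 2 := by gcongr
    linear_combination 4 * b2 + 4 * h3

theorem aux_tot (n : ℕ) (hn : 1 ≤ n) (t : ℝ) (ht : 0 < t) :
    Summable fun mk : ℕ × ℕ => |(Real.Gamma (2 * n) / (4 * Real.pi ^ (2 * n + 2))) *
    (2 * (mk.2 : ℝ) + 2 * mk.1 + 2 * n + 1) * (2 * (mk.1 : ℝ) + 1) *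
    (Nat.choose (mk.2 + 2 * mk.1 + 2 * n) (2 * n - 1) : ℝ)| *
    rexp (-(4 * (mk.2 : ℝ) * (mk.2 + 2 * n + 2 * mk.1 + 1) + 8 * n * mk.1) * t) *
    (1 + (4 * (mk.2 : ℝ) * (mk.2 + 2 * n + 2 * mk.1 + 1) + 8 * n * mk.1) + 4 * (mk.1 * (mk.1 + 1))) *
    (4 * ((mk.2 : ℝ) + 2 * mk.1 + 2 * n + 1) * ((mk.2 : ℝ) + 2 * mk.1 + 2 * n + 1) ^ mk.2) *
    (4 * ((mk.2 : ℝ) + 2 * mk.1 + 2 * n + 1)) := by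
  refine Summable.of_nonneg_of_le (fun mk => by positivity) (fun mk => ?_)
    ((aux_summ n hn ((2 * n - 1) + 6) t ht).mul_left
      (|Real.Gamma (2 * n) / (4 * Real.pi ^ (2 * n + 2))| * 640))
  obtain ⟨m, k⟩ := mk
  simp only
  set N : ℝ := (k : ℝ) + 2 * m + 2 * n + 1 with hN
  have hk : (0 : ℝ) ≤ k := by positivity
  have hm : (0 : ℝ) ≤ m := by positivity
  have hn0 : (0 : ℝ) ≤ n := by positivity
  have hN0 : 0 < N := by positivity
  generalize hE : rexp (-(4 * (k : ℝ) * (k + 2 * n + 2 * m + 1) + 8 * n * m) * t) = E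
  have hE0 : 0 < E := by rw [← hE]; positivity
  have c1 : (2 * (k : ℝ) + 2 * m + 2 * n + 1) ≤ 2 * N := by rw [hN]; linarith
  have c2 : (2 * (m : ℝ) + 1) ≤ N := by rw [hN]; linarith
  have c3 : (Nat.choose (k + 2 * m + 2 * n) (2 * n - 1) : ℝ) ≤ N ^ (2 * n - 1) := by
    calc (Nat.choose (k + 2 * m + 2 * n) (2 * n - 1) : ℝ)
        ≤ ((k + 2 * m + 2 * n : ℕ) : ℝ) ^ (2 * n - 1) := by
          exact_mod_cast Nat.choose_le_pow _ _
      _ ≤ _ := by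
          gcongr
          rw [hN]; push_cast; linarith
  have c4 : (1 + (4 * (k : ℝ) * (k + 2 * n + 2 * m + 1) + 8 * n * m) + 4 * (m * (m + 1))) ≤ 20 * N ^ 2 := by
    rw [hN]
    nlinarith [mul_nonneg hk hm, mul_nonneg hk hn0, mul_nonneg hm hn0, sq_nonneg (k : ℝ), sq_nonneg (m : ℝ), sq_nonneg (n : ℝ)]
  rw [abs_mul, abs_mul, abs_mul, abs_of_nonneg (show (0 : ℝ) ≤ 2 * (k : ℝ) + 2 * m + 2 * n + 1 by positivity),
    abs_of_nonneg (show (0 : ℝ) ≤ 2 * (m : ℝ) + 1 by positivity), Nat.abs_cast]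
  calc _ ≤ |Real.Gamma (2 * n) / (4 * Real.pi ^ (2 * n + 2))| * (2 * N) * N * N ^ (2 * n - 1) *
        E * (20 * N ^ 2) * (4 * N * N ^ k) * (4 * N) := by gcongr
    _ = _ := by rw [pow_add N (2 * n - 1) 6]; ring

theorem aux_A (n : ℕ) (hn : 1 ≤ n) (J : ℕ → ℕ → ℕ → ℝ → ℝ) (hJ : IsJacobi J) (m k : ℕ) :
    ∃ A1 A2 : ℝ → ℝ,
    (∀ x, HasDerivAt (fun x => cos x ^ (2 * m) * J k (2 * n - 1) (2 * m + 1) (cos (2 * x))) (A1 x) x) ∧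
    (∀ x, HasDerivAt A1 (A2 x) x) ∧
    (∀ x, |cos x ^ (2 * m) * J k (2 * n - 1) (2 * m + 1) (cos (2 * x))| ≤
      4 * ((k : ℝ) + 2 * m + 2 * n + 1) * ((k : ℝ) + 2 * m + 2 * n + 1) ^ k) ∧
    (∀ x, |A1 x| ≤ 4 * ((k : ℝ) + 2 * m + 2 * n + 1) * ((k : ℝ) + 2 * m + 2 * n + 1) ^ k) ∧
    (∀ x ∈ Ioo 0 (π / 2), A2 x = -((4 * (n : ℝ) - 1) * Real.cot x - 3 * Real.tan x) * A1 x +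
      (Real.tan x ^ 2 * (4 * (m * (m + 1))) - (4 * (k : ℝ) * (k + 2 * n + 2 * m + 1) + 8 * n * m)) *
      (cos x ^ (2 * m) * J k (2 * n - 1) (2 * m + 1) (cos (2 * x)))) := by
  obtain ⟨u1, u2, du, du1, bu, ou1, ou2⟩ := aux_cos m
  obtain ⟨g1, g2, dg, dg1, og, bg⟩ := aux_g J hJ k (2 * n - 1) (2 * m + 1)
  have hcast : ((2 * n - 1 : ℕ) : ℝ) = 2 * n - 1 := by
    rw [Nat.cast_sub (by omega)]; push_cast; ring
  set N : ℝ := (k : ℝ) + 2 * m + 2 * n + 1 with hN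
  have hN0 : 0 < N := by positivity
  have hN1 : 1 ≤ N := by
    rw [hN]
    have : (0 : ℝ) ≤ (k : ℝ) + 2 * m + 2 * n := by positivity
    linarith
  have hk : (0 : ℝ) ≤ k := by positivity
  have hm : (0 : ℝ) ≤ m := by positivity
  have hn0 : (1 : ℝ) ≤ n := by exact_mod_cast hn
  have hbg := bg (N ^ k)
    (by
      calc ((k + (2 * n - 1)).choose k : ℝ) ≤ ((k + (2 * n - 1) : ℕ) : ℝ) ^ k := by
            exact_mod_cast Nat.choose_le_pow _ _
        _ ≤ _ := by
            gcongr
            push_cast [hcast]; rw [hN]; linarith)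
    (by
      calc ((k + (2 * m + 1)).choose k : ℝ) ≤ ((k + (2 * m + 1) : ℕ) : ℝ) ^ k := by
            exact_mod_cast Nat.choose_le_pow _ _
        _ ≤ _ := by
            gcongr
            push_cast; rw [hN]; linarith)
  have hM : 0 < N ^ k := by positivity
  have bu0 : ∀ x, |cos x ^ (2 * m)| ≤ 1 := fun x => by
    rw [abs_pow]; exact pow_le_one₀ (abs_nonneg _) (abs_cos_le_one x)
  refine ⟨fun x => u1 x * J k (2 * n - 1) (2 * m + 1) (cos (2 * x)) + cos x ^ (2 * m) * g1 x,
    fun x => (u2 x * J k (2 * n - 1) (2 * m + 1) (cos (2 * x)) + u1 x * g1 x) +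
      (u1 x * g1 x + cos x ^ (2 * m) * g2 x), fun x => (du x).mul (dg x),
    fun x => ((du1 x).mul (dg x)).add ((du x).mul (dg1 x)), ?_, ?_, ?_⟩
  · intro x
    rw [abs_mul]
    calc _ ≤ 1 * N ^ k := mul_le_mul (bu0 x) (hbg x).1 (abs_nonneg _) (by norm_num)
      _ ≤ 4 * N * N ^ k := by gcongr; linarith
  · intro x
    refine (abs_add_le _ _).trans ?_
    rw [abs_mul, abs_mul]
    have h1 := mul_le_mul (bu x) (hbg x).1 (abs_nonneg _) (by positivity)
    have h2 := mul_le_mul (bu0 x) (hbg x).2 (abs_nonneg _) (by norm_num)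
    have h3 : (2 * m + 2 * ((k : ℝ) + (2 * n - 1 : ℕ) + (2 * m + 1 : ℕ) + 1)) * N ^ k ≤ 4 * N * N ^ k := by
      gcongr
      rw [hcast, hN]; push_cast; linarith
    linarith
  · intro x hx
    have hs : sin x ≠ 0 := (sin_pos_of_pos_of_lt_pi hx.1 (by linarith [hx.2, pi_pos])).ne'
    have hc : cos x ≠ 0 := (cos_pos_of_mem_Ioo ⟨by linarith [hx.1, pi_pos], hx.2⟩).ne'
    have o1 := ou1 x
    have o2 := ou2 x
    have o3 := og x
    have hsc := sin_sq_add_cos_sq x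
    rw [sin_two_mul] at o3
    simp only
    generalize J k (2 * n - 1) (2 * m + 1) (cos (2 * x)) = g at *
    rw [cos_two_mul', hcast] at o3
    push_cast at o3
    rw [Real.tan_eq_sin_div_cos, Real.cot_eq_cos_div_sin]
    generalize cos x ^ (2 * m) = u at *
    generalize u1 x = v1 at *
    generalize u2 x = v2 at *
    generalize g1 x = w1 at *
    generalize g2 x = w2 at *
    generalize sin x = s at *
    generalize cos x = c at *
    have q1 : v1 = -(2 * m) * (s / c) * u := by
      field_simp; linear_combination o1
    have q2 : v2 = ((4 * m ^ 2 - 2 * m) * (s / c) ^ 2 - 2 * m) * u := by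
      field_simp; linear_combination o2
    have q3 : w2 = -4 * k * (k + 2 * n + 2 * m + 1) * g + w1 * ((1 - 4 * n) * (c / s) + (4 * m + 3) * (s / c)) := by
      field_simp
      linear_combination o3 / 2 - w1 * (2 * m + 2 - 2 * n) * hsc
    have hTQ : (s / c) * (c / s) = 1 := by field_simp
    rw [q1, q2, q3]
    linear_combination (-(2 * m) * (4 * n - 1) * u * g) * hTQ

theorem stmt_14 (n : ℕ) (hn : 1 ≤ n) (J : ℕ → ℕ → ℕ → ℝ → ℝ) (hJ : IsJacobi J) :
    (∀ t r φ : ℝ, 0 < t → r ∈ Set.Ico 0 (π / 2) → φ ∈ Set.Icc 0 (π / 2) →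
      Summable (fun mk : ℕ × ℕ => |hTerm n J t r φ mk|)) ∧
    (∀ t r φ : ℝ, t ∈ Set.Ioi (0 : ℝ) → r ∈ Set.Ioo 0 (π / 2) → φ ∈ Set.Ioo 0 (π / 2) →
      deriv (fun s => hKernel n J s r φ) t =
        iteratedDeriv 2 (fun ρ => hKernel n J t ρ φ) r +
          ((4 * (n : ℝ) - 1) * Real.cot r - 3 * Real.tan r) *
            deriv (fun ρ => hKernel n J t ρ φ) r +
          Real.tan r ^ 2 *
            (iteratedDeriv 2 (fun e => hKernel n J t r e) φ +
              2 * Real.cot (2 * φ) * deriv (fun e => hKernel n J t r e) φ)) := by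
  choose A1 A2 dA dA1 bA bA1 oA using aux_A n hn J hJ
  have hB := fun m => aux_g J hJ m 0 0
  choose B1 B2 dB dB1 oB bB using hB
  have bB' : ∀ (m k : ℕ) x, |J m 0 0 (cos (2 * x))| ≤ 4 * ((k : ℝ) + 2 * m + 2 * n + 1) ∧
      |B1 m x| ≤ 4 * ((k : ℝ) + 2 * m + 2 * n + 1) := by
    intro m k x
    obtain ⟨h1, h2⟩ := bB m 1 (by simp) (by simp) x
    have hk : (0 : ℝ) ≤ k := by positivity
    have hm : (0 : ℝ) ≤ m := by positivity
    have hn0 : (1 : ℝ) ≤ n := by exact_mod_cast hn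
    push_cast at h2
    constructor <;> linarith
  let c : ℕ × ℕ → ℝ := fun mk => (Real.Gamma (2 * n) / (4 * Real.pi ^ (2 * n + 2))) *
    (2 * (mk.2 : ℝ) + 2 * mk.1 + 2 * n + 1) * (2 * (mk.1 : ℝ) + 1) *
    (Nat.choose (mk.2 + 2 * mk.1 + 2 * n) (2 * n - 1) : ℝ)
  let l : ℕ × ℕ → ℝ := fun mk => 4 * (mk.2 : ℝ) * (mk.2 + 2 * n + 2 * mk.1 + 1) + 8 * n * mk.1
  let A : ℕ × ℕ → ℝ → ℝ := fun mk x =>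
    cos x ^ (2 * mk.1) * J mk.2 (2 * n - 1) (2 * mk.1 + 1) (cos (2 * x))
  let B : ℕ × ℕ → ℝ → ℝ := fun mk x => J mk.1 0 0 (cos (2 * x))
  have hterm : ∀ t r φ mk, hTerm n J t r φ mk = c mk * rexp (-l mk * t) * A mk r * B mk φ := by
    intro t r φ mk
    simp only [hTerm, c, l, A, B]
    ring
  have hl : ∀ i, 0 ≤ l i := fun i => by simp only [l]; positivity
  constructor
  · intro t r φ ht _ _
    refine Summable.of_nonneg_of_le (fun _ => abs_nonneg _) (fun mk => ?_) (aux_tot n hn t ht)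
    rw [hterm, abs_mul, abs_mul, abs_mul, Real.abs_exp]
    refine mul_le_mul (mul_le_mul ?_ (bA mk.1 mk.2 r) (abs_nonneg _) (by positivity))
      (bB' mk.1 mk.2 φ).1 (abs_nonneg _) (by positivity)
    refine le_mul_of_one_le_right (by positivity) ?_
    have h1 := hl mk
    have h2 : (0 : ℝ) ≤ 4 * (mk.1 * (mk.1 + 1)) := by positivity
    simp only [l] at h1
    linarith
  · intro t r φ ht hr hφ
    simp only [hKernel, hterm]
    refine aux_pde c l (fun mk => 4 * (mk.1 * (mk.1 + 1)))
      (fun mk => 4 * ((mk.2 : ℝ) + 2 * mk.1 + 2 * n + 1) * ((mk.2 : ℝ) + 2 * mk.1 + 2 * n + 1) ^ mk.2)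
      (fun mk => 4 * ((mk.2 : ℝ) + 2 * mk.1 + 2 * n + 1))
      A (fun mk => A1 mk.1 mk.2) (fun mk => A2 mk.1 mk.2)
      B (fun mk => B1 mk.1) (fun mk => B2 mk.1)
      (fun x => (4 * (n : ℝ) - 1) * Real.cot x - 3 * Real.tan x) (fun x => Real.tan x ^ 2)
      (fun x => 2 * Real.cot (2 * x)) (Ioo 0 (π / 2)) (Ioo 0 (π / 2)) isOpen_Ioo isOpen_Ioo
      hl (fun mk => by positivity) (fun mk x => dA mk.1 mk.2 x) (fun mk x => dA1 mk.1 mk.2 x)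
      (fun mk x => dB mk.1 x) (fun mk x => dB1 mk.1 x) (fun mk x => bA mk.1 mk.2 x)
      (fun mk x => bA1 mk.1 mk.2 x) (fun mk x => (bB' mk.1 mk.2 x).1)
      (fun mk x => (bB' mk.1 mk.2 x).2) (fun mk x hx => oA mk.1 mk.2 x hx) ?_ ?_ ?_ ?_
      (fun t ht => aux_tot n hn t ht) t r φ ht hr hφ
    · intro mk x hx
      have hs : sin (2 * x) ≠ 0 :=
        (sin_pos_of_pos_of_lt_pi (by linarith [hx.1]) (by linarith [hx.2])).ne'
      have := oB mk.1 x
      simp only [B]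
      rw [Real.cot_eq_cos_div_sin]
      field_simp
      push_cast at this
      linear_combination this
    all_goals
      have hT : ContinuousOn Real.tan (Ioo 0 (π / 2)) := fun x hx =>
        (continuousAt_tan.2 (cos_pos_of_mem_Ioo ⟨by linarith [hx.1, pi_pos], hx.2⟩).ne').continuousWithinAt
      have hC : ContinuousOn Real.cot (Ioo 0 π) := by
        have : Real.cot = fun x => cos x / sin x := by funext x; exact Real.cot_eq_cos_div_sin x
        rw [this]
        exact continuous_cos.continuousOn.div continuous_sin.continuousOn
          fun x hx => (sin_pos_of_pos_of_lt_pi hx.1 hx.2).ne'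
    · exact (continuousOn_const.mul (hC.mono (Ioo_subset_Ioo_right (by linarith [pi_pos])))).sub
        (continuousOn_const.mul hT)
    · exact hT.pow 2
    · exact continuousOn_const.mul (hC.comp (by fun_prop)
        fun x hx => ⟨by linarith [hx.1], by linarith [hx.2]⟩)
end

section
/- For every integer n ≥ 1, every t > 0, r ∈ [0, π/2) and φ ∈ (0, π/2], one has h_t(r, φ) = (1/(2π))·∫_0^π p_t(r, arccos(cos φ·cos θ)) dθ, intertwining the subelliptic heat kernel h_t on CP^{2n+1} with the subelliptic heat kernel p_t of the quaternionic Hopf fibration on S^{4n+3}. -/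
open Real MeasureTheory Filter Topology Set

namespace Aux15
open Polynomial

lemma U_explicit (x : ℝ) (m : ℕ) : ∀ N, m + 1 ≤ N →
    (Chebyshev.U ℝ ((2 * m : ℕ) : ℤ)).eval x =
      ∑ i ∈ Finset.range N, (-1 : ℝ) ^ (m + i) * ((m + i).choose (2 * i) : ℝ) * (2 * x) ^ (2 * i) ∧
    (Chebyshev.U ℝ ((2 * m + 1 : ℕ) : ℤ)).eval x =
      ∑ i ∈ Finset.range N, (-1 : ℝ) ^ (m + i) * ((m + i + 1).choose (2 * i + 1) : ℝ)
        * (2 * x) ^ (2 * i + 1) := by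
  induction m with
  | zero =>
    intro N hN
    obtain ⟨N, rfl⟩ : ∃ M, N = M + 1 := ⟨N - 1, by omega⟩
    rw [Finset.sum_range_succ', Finset.sum_range_succ']
    rw [Finset.sum_eq_zero, Finset.sum_eq_zero]
    · simp
    · intro i _
      rw [Nat.choose_eq_zero_of_lt (by omega)]; simp
    · intro i _
      rw [Nat.choose_eq_zero_of_lt (by omega)]; simp
  | succ m ih =>
    have hE : ∀ N, m + 1 + 1 ≤ N → (Chebyshev.U ℝ ((2 * (m + 1) : ℕ) : ℤ)).eval x =
      ∑ i ∈ Finset.range N, (-1 : ℝ) ^ (m + 1 + i) * ((m + 1 + i).choose (2 * i) : ℝ)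
        * (2 * x) ^ (2 * i) := by
      intro N hN
      obtain ⟨N, rfl⟩ : ∃ M, N = M + 1 := ⟨N - 1, by omega⟩
      have e : ((2 * (m + 1) : ℕ) : ℤ) = ((2 * m : ℕ) : ℤ) + 2 := by push_cast; ring
      have e1 : ((2 * m : ℕ) : ℤ) + 1 = ((2 * m + 1 : ℕ) : ℤ) := by push_cast; ring
      rw [e, Chebyshev.U_add_two, e1]
      simp only [eval_sub, eval_mul, eval_X, eval_ofNat]
      rw [(ih N (by omega)).2, (ih (N + 1) (by omega)).1, Finset.mul_sum, Finset.sum_range_succ',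
        Finset.sum_range_succ' _ N, ← sub_sub, ← Finset.sum_sub_distrib]
      have : ∀ i ∈ Finset.range N, 2 * x * ((-1 : ℝ) ^ (m + i) * ((m + i + 1).choose (2 * i + 1) : ℝ)
        * (2 * x) ^ (2 * i + 1)) - (-1 : ℝ) ^ (m + (i + 1)) * ((m + (i + 1)).choose (2 * (i + 1)) : ℝ)
          * (2 * x) ^ (2 * (i + 1)) = (-1 : ℝ) ^ (m + 1 + (i + 1)) *
          ((m + 1 + (i + 1)).choose (2 * (i + 1)) : ℝ) * (2 * x) ^ (2 * (i + 1)) := by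
        intro i _
        have : (m + 1 + (i + 1)).choose (2 * (i + 1)) = (m + i + 1).choose (2 * i + 1) +
            (m + (i + 1)).choose (2 * (i + 1)) := by
          rw [show m + 1 + (i + 1) = (m + i + 1) + 1 by ring, show 2 * (i + 1) = 2 * i + 1 + 1 by ring,
            Nat.choose_succ_succ]; rfl
        rw [this]; push_cast; ring
      rw [Finset.sum_congr rfl this]
      simp; ring
    intro N hN
    refine ⟨hE N hN, ?_⟩
    have e : ((2 * (m + 1) + 1 : ℕ) : ℤ) = ((2 * m + 1 : ℕ) : ℤ) + 2 := by push_cast; ring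
    have e1 : ((2 * m + 1 : ℕ) : ℤ) + 1 = ((2 * (m + 1) : ℕ) : ℤ) := by push_cast; ring
    rw [e, Chebyshev.U_add_two, e1]
    simp only [eval_sub, eval_mul, eval_X, eval_ofNat]
    rw [hE N hN, (ih N (by omega)).2, Finset.mul_sum, ← Finset.sum_sub_distrib]
    refine Finset.sum_congr rfl fun i _ => ?_
    have : (m + 1 + i + 1).choose (2 * i + 1) = (m + 1 + i).choose (2 * i) +
        (m + i + 1).choose (2 * i + 1) := by
      rw [Nat.choose_succ_succ, show m + 1 + i = m + i + 1 by ring]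
    rw [this]; push_cast; ring

lemma cos_moment (i : ℕ) : ∫ θ in (0:ℝ)..π, (Real.cos θ) ^ (2 * i) =
    π * ((2 * i).choose i : ℝ) / 4 ^ i := by
  rw [← Nat.centralBinom_eq_two_mul_choose]
  induction i with
  | zero => simp
  | succ i ih =>
    rw [show 2 * (i + 1) = 2 * i + 2 by ring, integral_cos_pow, ih]
    have h := Nat.succ_mul_centralBinom_succ i
    have h' : ((i : ℝ) + 1) * ((i + 1).centralBinom : ℝ) = 2 * (2 * i + 1) * (i.centralBinom : ℝ) := by
      exact_mod_cast h
    have : ((i + 1).centralBinom : ℝ) = 2 * (2 * i + 1) * (i.centralBinom : ℝ) / (i + 1) := by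
      field_simp; linarith
    rw [this]
    simp
    field_simp
    ring

lemma choose_id (m i : ℕ) (h : i ≤ m) :
    (m + i).choose (2 * i) * (2 * i).choose i = m.choose i * (m + i).choose m := by
  rw [Nat.choose_mul (by omega), show m + i - i = m by omega, show 2 * i - i = i by omega,
    mul_comm, Nat.choose_symm_add]

lemma int_U_even (c : ℝ) (m : ℕ) :
    ∫ θ in (0:ℝ)..π, (Chebyshev.U ℝ ((2 * m : ℕ) : ℤ)).eval (c * Real.cos θ) =
      π * ∑ i ∈ Finset.range (m + 1), (-1 : ℝ) ^ (m + i) * (m.choose i : ℝ) *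
        ((m + i).choose m : ℝ) * (c ^ 2) ^ i := by
  simp_rw [fun θ => (U_explicit (c * Real.cos θ) m (m + 1) le_rfl).1]
  rw [intervalIntegral.integral_finsetSum, Finset.mul_sum]
  · refine Finset.sum_congr rfl fun i hi => ?_
    have : ∀ θ : ℝ, (-1 : ℝ) ^ (m + i) * ((m + i).choose (2 * i) : ℝ) * (2 * (c * Real.cos θ)) ^ (2 * i)
      = ((-1 : ℝ) ^ (m + i) * ((m + i).choose (2 * i) : ℝ) * (4 ^ i * (c ^ 2) ^ i)) *
        Real.cos θ ^ (2 * i) := by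
      intro θ
      rw [mul_pow, mul_pow, pow_mul 2, pow_mul c]; norm_num; ring
    simp_rw [this]
    rw [intervalIntegral.integral_const_mul, cos_moment]
    have := choose_id m i (by have := Finset.mem_range.1 hi; omega)
    have h2 : ((m + i).choose (2 * i) : ℝ) * ((2 * i).choose i : ℝ) = m.choose i * (m + i).choose m := by
      exact_mod_cast this
    have h4 : (4 : ℝ) ^ i ≠ 0 := by positivity
    field_simp
    linear_combination (c ^ 2) ^ i * h2
  · intro i _
    apply Continuous.intervalIntegrable
    fun_prop

lemma int_U_odd (c : ℝ) (m : ℕ) :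
    ∫ θ in (0:ℝ)..π, (Chebyshev.U ℝ ((2 * m + 1 : ℕ) : ℤ)).eval (c * Real.cos θ) = 0 := by
  have h := intervalIntegral.integral_comp_sub_left (a := 0) (b := π)
    (fun θ => (Chebyshev.U ℝ ((2 * m + 1 : ℕ) : ℤ)).eval (c * Real.cos θ)) π
  simp only [Real.cos_pi_sub, mul_neg, Chebyshev.U_eval_neg, sub_self, sub_zero] at h
  have e : (((2 * m + 1 : ℕ) : ℤ).negOnePow : ℤ) = -1 := by
    rw [Int.negOnePow_odd]; · simp
    · exact ⟨m, by push_cast; ring⟩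
  rw [e] at h
  simp only [Int.cast_neg, Int.cast_one, neg_mul, one_mul, intervalIntegral.integral_neg] at h
  linarith

lemma iteratedDeriv_poly (p : ℝ[X]) (k : ℕ) :
    iteratedDeriv k (fun x => p.eval x) = fun x => (derivative^[k] p).eval x := by
  induction k with
  | zero => simp
  | succ k ih =>
    rw [iteratedDeriv_succ, ih, Function.iterate_succ_apply']
    funext x
    exact Polynomial.deriv _

lemma eq_of_Ioo {f g : ℝ → ℝ} (hf : Continuous f) (hg : Continuous g)
    (h : ∀ x ∈ Set.Ioo (-1 : ℝ) 1, f x = g x) : ∀ x ∈ Set.Icc (-1 : ℝ) 1, f x = g x := by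
  have : closure (Set.Ioo (-1 : ℝ) 1) ⊆ {x | f x = g x} :=
    (isClosed_eq hf hg).closure_subset_iff.2 h
  rw [closure_Ioo (by norm_num)] at this
  exact this

lemma J_cont {J : ℕ → ℕ → ℕ → ℝ → ℝ} (hJ : IsJacobi J) (k α β : ℕ) : Continuous (J k α β) := by
  obtain ⟨p, hp⟩ := (hJ k α β).1
  rw [funext hp]
  exact p.continuous

lemma legendre_formula (m : ℕ) (y : ℝ) : jacobiFormula m 0 0 (2 * y - 1) =
    ∑ i ∈ Finset.range (m + 1), (-1 : ℝ) ^ (m + i) * (m.choose i : ℝ) *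
        ((m + i).choose m : ℝ) * y ^ i := by
  have hR := congrArg (Polynomial.map (Int.castRingHom ℝ)) (factorial_mul_shiftedLegendre_eq m)
  rw [← iterate_derivative_map] at hR
  simp only [Polynomial.map_mul, Polynomial.map_pow, Polynomial.map_sub, Polynomial.map_X,
    Polynomial.map_one, Polynomial.map_natCast] at hR
  have hS : ((shiftedLegendre m).map (Int.castRingHom ℝ)).eval y =
      ∑ i ∈ Finset.range (m + 1), (-1 : ℝ) ^ i * (m.choose i : ℝ) *
        ((m + i).choose m : ℝ) * y ^ i := by
    simp [shiftedLegendre, Polynomial.map_sum, eval_finsetSum]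
  have hR' := congrArg (Polynomial.eval y) hR
  rw [eval_mul, hS, eval_natCast] at hR'
  set P : ℝ[X] := X ^ m * (1 - X) ^ m with hP
  have hf : (fun z : ℝ => (1 - z) ^ (0 + m) * (1 + z) ^ (0 + m)) =
      fun z => (fun w => 4 ^ m * (fun v => P.eval ((1/2) * v)) w) (z + 1) := by
    funext z
    simp only [hP, eval_mul, eval_pow, eval_X, eval_sub, eval_one, zero_add]
    rw [← mul_pow, ← mul_pow, ← mul_pow]
    congr 1; ring
  have hd : iteratedDeriv m (fun z : ℝ => (1 - z) ^ (0 + m) * (1 + z) ^ (0 + m)) (2 * y - 1) =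
      4 ^ m * ((1/2) ^ m * (derivative^[m] P).eval y) := by
    rw [hf, iteratedDeriv_comp_add_const m (fun w => 4 ^ m * (fun v => P.eval ((1/2) * v)) w) 1]
    simp only []
    rw [iteratedDeriv_const_mul_field, iteratedDeriv_comp_const_mul (f := fun x => P.eval x)
      (by simp only [hP, eval_mul, eval_pow, eval_X, eval_sub, eval_one]; fun_prop), iteratedDeriv_poly]
    simp only
    congr 3; ring
  rw [jacobiFormula, hd, ← hR']
  simp only [pow_add, mul_assoc, ← Finset.mul_sum]
  have : (4 : ℝ) ^ m = 2 ^ m * 2 ^ m := by rw [← mul_pow]; norm_num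
  have h0 : (m.factorial : ℝ) ≠ 0 := by positivity
  rw [this]
  simp
  field_simp

lemma legendre_cos {J : ℕ → ℕ → ℕ → ℝ → ℝ} (hJ : IsJacobi J) (m : ℕ) (φ : ℝ) :
    ∫ θ in (0:ℝ)..π, (Chebyshev.U ℝ ((2 * m : ℕ) : ℤ)).eval (Real.cos φ * Real.cos θ) =
      π * J m 0 0 (Real.cos (2 * φ)) := by
  rw [int_U_even, ← legendre_formula, ← Real.cos_two_mul]
  congr 1
  symm
  refine eq_of_Ioo (J_cont hJ _ _ _) ?_ (hJ m 0 0).2 _ ⟨Real.neg_one_le_cos _, Real.cos_le_one _⟩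
  have : jacobiFormula m 0 0 = fun x => ∑ i ∈ Finset.range (m + 1), (-1 : ℝ) ^ (m + i) *
      (m.choose i : ℝ) * ((m + i).choose m : ℝ) * ((x + 1) / 2) ^ i := by
    funext x
    rw [← legendre_formula]; congr 1; ring
  rw [this]
  fun_prop

lemma iter_one_sub (a j : ℕ) (x : ℝ) :
    (derivative^[j] ((1 - X : ℝ[X]) ^ a)).eval x = (-1) ^ j * (a.descFactorial j * (1 - x) ^ (a - j)) := by
  have h := iterate_derivative_comp_one_sub_X ((X : ℝ[X]) ^ a) j
  rw [iterate_derivative_X_pow_eq_natCast_mul] at h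
  simp only [pow_comp, X_comp] at h
  rw [h]
  simp

lemma iter_one_add (a j : ℕ) (x : ℝ) :
    (derivative^[j] ((1 + X : ℝ[X]) ^ a)).eval x = a.descFactorial j * (1 + x) ^ (a - j) := by
  have h := iterate_derivative_X_add_pow a j (1 : ℝ)
  rw [C_1, add_comm] at h
  rw [h]
  simp

lemma jacobi_bound_Ioo (k α β : ℕ) (x : ℝ) (hx : x ∈ Set.Ioo (-1 : ℝ) 1) :
    |jacobiFormula k α β x| ≤ ((α + β + 2 * k : ℕ) : ℝ) ^ k := by
  have hu : 0 < 1 - x := by linarith [hx.2]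
  have hv : 0 < 1 + x := by linarith [hx.1]
  have hu2 : 1 - x ≤ 2 := by linarith [hx.1]
  have hv2 : 1 + x ≤ 2 := by linarith [hx.2]
  have hd : iteratedDeriv k (fun y : ℝ => (1 - y) ^ (α + k) * (1 + y) ^ (β + k)) x =
      ∑ i ∈ Finset.range (k + 1), (k.choose i : ℝ) * (((-1) ^ (k - i) *
        ((α + k).descFactorial (k - i) * (1 - x) ^ (α + k - (k - i)))) *
        ((β + k).descFactorial i * (1 + x) ^ (β + k - i))) := by
    have : (fun y : ℝ => (1 - y) ^ (α + k) * (1 + y) ^ (β + k)) =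
      fun y => ((1 - X : ℝ[X]) ^ (α + k) * (1 + X) ^ (β + k)).eval y := by
      funext y; simp
    rw [this, iteratedDeriv_poly, iterate_derivative_mul]
    simp only [eval_finsetSum, eval_natCast, Nat.succ_eq_add_one, eval_mul, iter_one_sub, iter_one_add, nsmul_eq_mul]
  rw [jacobiFormula, hd, Finset.mul_sum]
  refine (Finset.abs_sum_le_sum_abs _ _).trans ?_
  have hsum : ((α + β + 2 * k : ℕ) : ℝ) ^ k = ∑ i ∈ Finset.range (k + 1),
      ((β + k : ℕ) : ℝ) ^ i * ((α + k : ℕ) : ℝ) ^ (k - i) * (k.choose i : ℝ) := by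
    rw [← add_pow]; congr 1; push_cast; ring
  rw [hsum]
  refine Finset.sum_le_sum fun i hi => ?_
  have hik : i ≤ k := by have := Finset.mem_range.1 hi; omega
  have e1 : α + k - (k - i) = α + i := by omega
  have e2 : β + k - i = β + (k - i) := by omega
  rw [e1, e2]
  simp only [abs_mul, abs_div, abs_pow, abs_neg, abs_one, one_pow, zpow_neg, zpow_natCast, abs_inv,
    abs_of_pos hu, abs_of_pos hv, Nat.abs_cast, Nat.abs_ofNat, one_mul]
  have d1 : ((α + k).descFactorial (k - i) : ℝ) ≤ ((α + k : ℕ) : ℝ) ^ (k - i) := by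
    exact_mod_cast Nat.descFactorial_le_pow _ _
  have d2 : ((β + k).descFactorial i : ℝ) ≤ ((β + k : ℕ) : ℝ) ^ i := by
    exact_mod_cast Nat.descFactorial_le_pow _ _
  have hf : (1 : ℝ) ≤ k.factorial := by exact_mod_cast Nat.one_le_iff_ne_zero.2 (Nat.factorial_ne_zero k)
  have hp : (1 - x) ^ i * (1 + x) ^ (k - i) ≤ 2 ^ k := by
    calc _ ≤ (2 : ℝ) ^ i * 2 ^ (k - i) := by gcongr
      _ = 2 ^ k := by rw [← pow_add]; congr 1; omega
  calc _ = ((β + k).descFactorial i : ℝ) * ((α + k).descFactorial (k - i) : ℝ) * (k.choose i : ℝ) *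
      ((1 - x) ^ i * (1 + x) ^ (k - i) / 2 ^ k) / k.factorial := by
        rw [pow_add, pow_add]; field_simp
    _ ≤ ((β + k).descFactorial i : ℝ) * ((α + k).descFactorial (k - i) : ℝ) * (k.choose i : ℝ) *
      1 / 1 := by
        gcongr
        rw [div_le_one (by positivity)]; exact hp
    _ ≤ _ := by
        rw [mul_one, div_one]; gcongr

lemma J_bound {J : ℕ → ℕ → ℕ → ℝ → ℝ} (hJ : IsJacobi J) (k α β : ℕ) (x : ℝ)
    (hx : x ∈ Set.Icc (-1 : ℝ) 1) : |J k α β x| ≤ ((α + β + 2 * k : ℕ) : ℝ) ^ k := by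
  have : closure (Set.Ioo (-1 : ℝ) 1) ⊆ {x | |J k α β x| ≤ ((α + β + 2 * k : ℕ) : ℝ) ^ k} :=
    (isClosed_le (J_cont hJ k α β).abs continuous_const).closure_subset_iff.2 fun y hy => by
      show |J k α β y| ≤ _
      rw [(hJ k α β).2 y hy]
      exact jacobi_bound_Ioo k α β y hy
  rw [closure_Ioo (by norm_num)] at this
  exact this hx

lemma sin_bound (m : ℕ) (x : ℝ) : |Real.sin (m * x)| ≤ m * |Real.sin x| := by
  induction m with
  | zero => simp
  | succ m ih =>
    push_cast
    rw [add_mul, one_mul, Real.sin_add]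
    refine (abs_add_le _ _).trans ?_
    rw [abs_mul, abs_mul, add_mul, one_mul]
    have h1 := Real.abs_cos_le_one x
    have h2 := Real.abs_cos_le_one (m * x)
    have := mul_le_mul_of_nonneg_left h1 (abs_nonneg (Real.sin (m * x)))
    have := mul_le_mul_of_nonneg_right h2 (abs_nonneg (Real.sin x))
    linarith

lemma sin_arccos_pos {y : ℝ} (h : |y| < 1) : 0 < Real.sin (Real.arccos y) := by
  rw [Real.sin_arccos, Real.sqrt_pos]
  nlinarith [abs_nonneg y, sq_abs y]

lemma vert_eq (m : ℕ) {y : ℝ} (h : |y| < 1) :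
    vertFactor m (Real.arccos y) = (Chebyshev.U ℝ (m : ℤ)).eval y := by
  have hs := sin_arccos_pos h
  have h0 : Real.arccos y ≠ 0 := by intro h0; rw [h0] at hs; simp at hs
  rw [vertFactor, if_neg h0, div_eq_iff hs.ne']
  have := Chebyshev.U_real_cos (Real.arccos y) (m : ℤ)
  rw [Real.cos_arccos (by linarith [(abs_lt.1 h).1]) (by linarith [(abs_lt.1 h).2])] at this
  rw [this]; simp

lemma U_bound (m : ℕ) {y : ℝ} (h : |y| < 1) : |(Chebyshev.U ℝ (m : ℤ)).eval y| ≤ m + 1 := by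
  have hs := sin_arccos_pos h
  have h0 : Real.arccos y ≠ 0 := by intro h0; rw [h0] at hs; simp at hs
  rw [← vert_eq m h, vertFactor, if_neg h0, abs_div, div_le_iff₀ (abs_pos.2 hs.ne')]
  have := sin_bound (m + 1) (Real.arccos y)
  push_cast at this
  exact this

lemma summable_m (N : ℕ) {s : ℝ} (hs : 0 < s) :
    Summable fun m : ℕ => ((m : ℝ) + 1) ^ N * Real.exp (-s * m) := by
  have h := ((summable_nat_add_iff 1).2 (Real.summable_pow_mul_exp_neg_nat_mul N hs)).mul_left
    (Real.exp s)
  refine h.congr fun m => ?_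
  push_cast
  rw [mul_left_comm, ← Real.exp_add]; congr 2; ring

lemma summable_k (N : ℕ) {s D : ℝ} (hs : 0 < s) (hD : 0 ≤ D) :
    Summable fun k : ℕ => ((k : ℝ) + 1) ^ N * (D * ((k : ℝ) + 1) * Real.exp (-s * k)) ^ k := by
  have h1 := ((summable_m 1 hs).mul_left D).tendsto_atTop_zero
  have h2 := summable_m N (s := 1) one_pos
  refine Summable.of_norm_bounded_eventually_nat h2 ?_
  filter_upwards [h1.eventually (gt_mem_nhds (Real.exp_pos (-1)))] with k hk
  rw [pow_one, ← mul_assoc] at hk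
  rw [Real.norm_of_nonneg (by positivity)]
  have : Real.exp (-1 * (k : ℝ)) = Real.exp (-1) ^ k := by
    rw [← Real.exp_nat_mul]; congr 1; ring
  rw [this]
  gcongr

/-- The `p`-term with the vertical factor written as a Chebyshev polynomial. -/
noncomputable def G (n : ℕ) (J : ℕ → ℕ → ℕ → ℝ → ℝ) (t r : ℝ) (mk : ℕ × ℕ) (y : ℝ) : ℝ :=
  (Real.Gamma (2 * n) / (2 * Real.pi ^ (2 * n + 2))) *
    (2 * (mk.2 : ℝ) + mk.1 + 2 * n + 1) * ((mk.1 : ℝ) + 1) *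
    (Nat.choose (mk.2 + mk.1 + 2 * n) (2 * n - 1) : ℝ) *
    Real.exp (-(4 * ((mk.2 : ℝ) * (mk.2 + 2 * n + mk.1 + 1) + n * mk.1)) * t) *
    (Chebyshev.U ℝ (mk.1 : ℤ)).eval y * Real.cos r ^ mk.1 *
    J mk.2 (2 * n - 1) (mk.1 + 1) (Real.cos (2 * r))

lemma G_bound {n : ℕ} (hn : 1 ≤ n) {J : ℕ → ℕ → ℕ → ℝ → ℝ} (hJ : IsJacobi J) {t : ℝ} (ht : 0 < t)
    (r : ℝ) : ∃ g : ℕ × ℕ → ℝ, Summable g ∧ ∀ mk, 0 ≤ g mk ∧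
      ∀ y : ℝ, |y| < 1 → |G n J t r mk y| ≤ g mk := by
  set s : ℝ := 4 * t with hsdef
  have hs : 0 < s := by positivity
  set K : ℝ := Real.Gamma (2 * n) / (2 * Real.pi ^ (2 * n + 2)) with hK
  have hK0 : 0 ≤ K := by
    have : 0 < Real.Gamma (2 * n) := Real.Gamma_pos_of_pos (by positivity)
    positivity
  set N := 2 * n + 2 with hN
  set c : ℝ := 2 * n + 1 with hc
  have hc0 : 0 ≤ c := by positivity
  set M : ℝ := 1 + 1 / s with hM
  have hM0 : 0 ≤ M := by positivity
  have hMb : ∀ m : ℕ, ((m : ℝ) + 1) * Real.exp (-s * m) ≤ M := by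
    intro m
    have h1 : s * m + 1 ≤ Real.exp (s * m) := Real.add_one_le_exp _
    have h2 : (1 : ℝ) ≤ Real.exp (s * m) := Real.one_le_exp (by positivity)
    rw [neg_mul, Real.exp_neg, ← div_eq_mul_inv, div_le_iff₀ (Real.exp_pos _), hM]
    have h3 : (m : ℝ) ≤ 1 / s * Real.exp (s * m) := by
      rw [div_mul_eq_mul_div, one_mul, le_div_iff₀ hs]; linarith
    linarith
  have hsum := ((summable_m N hs).mul_of_nonneg (summable_k N (D := c * M) hs (by positivity))
    (fun m => by positivity) (fun k => by positivity)).mul_left (K * c ^ N)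
  refine ⟨_, hsum, fun mk => ⟨by positivity, fun y hy => ?_⟩⟩
  obtain ⟨m, k⟩ := mk
  simp only [G]
  rw [← hK]
  set A : ℝ := 2 * (k : ℝ) + m + 2 * n + 1 with hA
  have hn' : (1 : ℝ) ≤ n := by exact_mod_cast hn
  have hk0 : (0 : ℝ) ≤ k := Nat.cast_nonneg k
  have hm0 : (0 : ℝ) ≤ m := Nat.cast_nonneg m
  have hA0 : 0 ≤ A := by positivity
  have hAc : A ≤ c * ((k : ℝ) + 1) * ((m : ℝ) + 1) := by
    have : 0 ≤ (k : ℝ) * m := by positivity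
    have : 0 ≤ (n : ℝ) * (k * m) := by positivity
    have : (k : ℝ) ≤ n * k := by nlinarith
    have : (m : ℝ) ≤ n * m := by nlinarith
    rw [hA, hc]; nlinarith
  have hU := U_bound m hy
  have hJb := J_bound hJ k (2 * n - 1) (m + 1) (Real.cos (2 * r))
    ⟨Real.neg_one_le_cos _, Real.cos_le_one _⟩
  have hJA : |J k (2 * n - 1) (m + 1) (Real.cos (2 * r))| ≤ A ^ k := by
    refine hJb.trans ?_
    gcongr
    rw [show 2 * n - 1 + (m + 1) + 2 * k = 2 * k + m + 2 * n by omega]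
    push_cast; rw [hA]; linarith
  have hCA : ((k + m + 2 * n).choose (2 * n - 1) : ℝ) ≤ A ^ (2 * n - 1) := by
    calc ((k + m + 2 * n).choose (2 * n - 1) : ℝ) ≤ ((k + m + 2 * n : ℕ) : ℝ) ^ (2 * n - 1) := by
          exact_mod_cast Nat.choose_le_pow _ _
      _ ≤ _ := by
          gcongr
          push_cast; rw [hA]; linarith
  have hcos : |Real.cos r ^ m| ≤ 1 := by
    rw [abs_pow]; exact pow_le_one₀ (abs_nonneg _) (Real.abs_cos_le_one r)
  have hexp : Real.exp (-(4 * ((k : ℝ) * (k + 2 * n + m + 1) + n * m)) * t) ≤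
      Real.exp (-s * k) ^ k * Real.exp (-s * m) ^ k * Real.exp (-s * m) := by
    rw [← Real.exp_nat_mul, ← Real.exp_nat_mul, ← Real.exp_add, ← Real.exp_add]
    apply Real.exp_le_exp.2
    rw [hsdef]
    have h1 : 0 ≤ (k : ℝ) * (2 * n + 1) * t := by positivity
    have h2 : 0 ≤ ((n : ℝ) - 1) * m * t := by
      have : 0 ≤ (n : ℝ) - 1 := by linarith
      positivity
    nlinarith
  have hm1 : (m : ℝ) + 1 ≤ A := by rw [hA]; linarith
  rw [abs_mul, abs_mul, abs_mul, abs_mul, abs_mul, abs_mul, abs_mul, abs_of_nonneg hK0,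
    abs_of_nonneg hA0, abs_of_nonneg (by positivity : (0 : ℝ) ≤ (m : ℝ) + 1), Nat.abs_cast,
    abs_of_pos (Real.exp_pos _)]
  calc _ ≤ K * A * A * A ^ (2 * n - 1) *
        (Real.exp (-s * k) ^ k * Real.exp (-s * m) ^ k * Real.exp (-s * m)) * A * 1 * A ^ k := by
        gcongr
        exact hU.trans hm1
    _ = K * A ^ (N + k) * (Real.exp (-s * k) ^ k * Real.exp (-s * m) ^ k * Real.exp (-s * m)) := by
        have : N + k = (2 * n - 1) + 3 + k := by omega
        rw [this]; ring
    _ ≤ K * (c * ((k : ℝ) + 1) * ((m : ℝ) + 1)) ^ (N + k) *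
          (Real.exp (-s * k) ^ k * Real.exp (-s * m) ^ k * Real.exp (-s * m)) := by
        gcongr
    _ = K * c ^ N * ((((m : ℝ) + 1) ^ N * Real.exp (-s * m)) *
          (((k : ℝ) + 1) ^ N * (c * (((m : ℝ) + 1) * Real.exp (-s * m)) * ((k : ℝ) + 1) *
            Real.exp (-s * k)) ^ k)) := by
        simp only [mul_pow, pow_add]; ring
    _ ≤ _ := by
        gcongr
        exact hMb m

lemma G_cont (n : ℕ) (J : ℕ → ℕ → ℕ → ℝ → ℝ) (t r : ℝ) (mk : ℕ × ℕ) :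
    Continuous (G n J t r mk) := by
  unfold G
  have := (Chebyshev.U ℝ (mk.1 : ℤ)).continuous
  fun_prop

lemma G_int (n : ℕ) {J : ℕ → ℕ → ℕ → ℝ → ℝ} (hJ : IsJacobi J) (t r φ : ℝ) (m k : ℕ) :
    ∫ θ in (0:ℝ)..π, G n J t r (2 * m, k) (Real.cos φ * Real.cos θ) =
      2 * π * hTerm n J t r φ (m, k) := by
  simp only [G, mul_assoc, intervalIntegral.integral_const_mul, intervalIntegral.integral_mul_const,
    hTerm]
  rw [legendre_cos hJ]
  push_cast
  have e : (-(4 * ((k : ℝ) * (k + (2 * n + (2 * m + 1))) + n * (2 * m))) * t) =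
    (-(4 * (k * (k + (2 * n + (2 * m + 1)))) + 8 * (n * m)) * t) := by ring
  have : (π : ℝ) ≠ 0 := Real.pi_ne_zero
  ring_nf

lemma G_int_odd (n : ℕ) (J : ℕ → ℕ → ℕ → ℝ → ℝ) (t r φ : ℝ) (m k : ℕ) :
    ∫ θ in (0:ℝ)..π, G n J t r (2 * m + 1, k) (Real.cos φ * Real.cos θ) = 0 := by
  simp only [G, mul_assoc, intervalIntegral.integral_const_mul, intervalIntegral.integral_mul_const]
  rw [int_U_odd]
  simp

end Aux15


/-- the intertwining between the subelliptic heat kernel `h_t` on `CP^{2n+1}`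
and the subelliptic heat kernel `p_t` of the quaternionic Hopf fibration on `S^{4n+3}`. -/
theorem stmt_15 (n : ℕ) (hn : 1 ≤ n) (J : ℕ → ℕ → ℕ → ℝ → ℝ) (hJ : IsJacobi J)
    (t r φ : ℝ) (ht : 0 < t) (hr : r ∈ Set.Ico 0 (π / 2)) (hφ : φ ∈ Set.Ioc 0 (π / 2)) :
    hKernel n J t r φ =
      (1 / (2 * π)) *
        ∫ θ in (0:ℝ)..π, pKernel n J t r (Real.arccos (Real.cos φ * Real.cos θ)) := by
  have hc : |Real.cos φ| < 1 := by
    rw [abs_lt]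
    have h0 : 0 ≤ Real.cos φ := Real.cos_nonneg_of_mem_Icc ⟨by linarith [hφ.1, Real.pi_pos], hφ.2⟩
    refine ⟨by linarith, ?_⟩
    rw [← Real.cos_zero]
    exact Real.cos_lt_cos_of_nonneg_of_le_pi_div_two le_rfl hφ.2 hφ.1
  have hy : ∀ θ : ℝ, |Real.cos φ * Real.cos θ| < 1 := by
    intro θ
    rw [abs_mul]
    exact (mul_le_of_le_one_right (abs_nonneg _) (Real.abs_cos_le_one θ)).trans_lt hc
  have hp : ∀ θ : ℝ, pKernel n J t r (Real.arccos (Real.cos φ * Real.cos θ)) =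
      ∑' mk : ℕ × ℕ, Aux15.G n J t r mk (Real.cos φ * Real.cos θ) := by
    intro θ
    unfold pKernel
    refine tsum_congr fun mk => ?_
    rw [pTerm, Aux15.vert_eq _ (hy θ), Aux15.G]
  simp_rw [hp]
  obtain ⟨g, hg, hgb⟩ := Aux15.G_bound hn hJ ht r
  let F : ℕ × ℕ → C(ℝ, ℝ) := fun mk =>
    ⟨fun θ => Aux15.G n J t r mk (Real.cos φ * Real.cos θ),
      (Aux15.G_cont n J t r mk).comp (by fun_prop)⟩
  have hsw := intervalIntegral.tsum_intervalIntegral_eq_of_summable_norm (a := 0) (b := π) (f := F)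
    (by
      refine Summable.of_nonneg_of_le (fun _ => norm_nonneg _) (fun mk => ?_) hg
      rw [ContinuousMap.norm_le _ (hgb mk).1]
      intro x
      exact (hgb mk).2 _ (hy x))
  have hsw' : ∑' mk : ℕ × ℕ, ∫ θ in (0:ℝ)..π, Aux15.G n J t r mk (Real.cos φ * Real.cos θ) =
    ∫ θ in (0:ℝ)..π, ∑' mk : ℕ × ℕ, Aux15.G n J t r mk (Real.cos φ * Real.cos θ) := hsw
  rw [← hsw']
  have hinj : Function.Injective (fun mk : ℕ × ℕ => ((2 * mk.1, mk.2) : ℕ × ℕ)) := by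
    rintro ⟨a, b⟩ ⟨c, d⟩ h
    simp only [Prod.mk.injEq] at h
    ext <;> simp <;> omega
  rw [← hinj.tsum_eq, ← tsum_mul_left]
  · unfold hKernel
    refine tsum_congr fun mk => ?_
    rw [Aux15.G_int n hJ]
    have : (π : ℝ) ≠ 0 := Real.pi_ne_zero
    field_simp
  · rintro ⟨m, k⟩ h
    rcases Nat.even_or_odd' m with ⟨a, rfl | rfl⟩
    · exact ⟨(a, k), rfl⟩
    · exact absurd (Aux15.G_int_odd n J t r φ a k) h
end

section
/- For every integer n ≥ 1, every t > 0, r ∈ [0, π/2) and φ ∈ (0, π/2], the subelliptic heat kernel on CP^{2n+1} admits the integral representation h_t(r, φ) = (e^{−t}/(2π√(πt)))·∫_0^π ∫_0^∞ (sinh y·sin(y·arccos(cos φ·cos θ)/(2t))/√(1 − cos²φ·cos²θ))·e^{−(y² − arccos(cos φ·cos θ)²)/(4t)}·q_t(cos r·cosh y) dy dθ. -/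
open Real MeasureTheory Filter Topology Set

section
open scoped Nat

/-- coefficients -/
noncomputable def jr (i a b q : ℕ) : ℝ :=
  (-1) ^ q * (Nat.choose i q : ℝ) * ((b + i)! : ℝ) / ((b + q)! : ℝ) *
    ((a + b + i + q)! : ℝ) / ((a + b + i)! : ℝ)

noncomputable def jP (i a b : ℕ) : Polynomial ℝ :=
  ∑ q ∈ Finset.range (i + 1), Polynomial.monomial q (jr i a b q)

lemma jP_coeff (i a b q : ℕ) : (jP i a b).coeff q = jr i a b q := by
  unfold jP
  rw [Polynomial.finsetSum_coeff]
  simp only [Polynomial.coeff_monomial]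
  rw [Finset.sum_ite_eq' (Finset.range (i+1)) q]
  split_ifs with h
  · rfl
  · have : i.choose q = 0 := Nat.choose_eq_zero_of_lt (by simpa using h)
    simp [jr, this]

lemma jP_succ (i a b : ℕ) :
    jP (i + 1) a b = Polynomial.X * Polynomial.derivative (jP i (a+1) (b+1))
      - Polynomial.X * (Polynomial.X * Polynomial.derivative (jP i (a+1) (b+1)))
      + Polynomial.C (b + 1 : ℝ) * jP i (a+1) (b+1)
      - Polynomial.C (a + b + 2 : ℝ) * (Polynomial.X * jP i (a+1) (b+1)) := by
  ext q
  rcases q with _ | q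
  · simp only [Polynomial.coeff_sub, Polynomial.coeff_add, Polynomial.coeff_C_mul,
      Polynomial.coeff_X_mul_zero, jP_coeff]
    unfold jr
    simp only [pow_zero, Nat.choose_zero_right, Nat.cast_one, add_zero, Nat.factorial_succ b]
    have e : b + (i + 1) = b + 1 + i := by ring
    rw [e]
    push_cast
    field_simp
    ring
  · have key : ((q:ℝ) + 1) * (i.choose (q+1)) = ((i:ℝ) - q) * i.choose q := by
      rcases le_or_gt q i with h | h
      · have := Nat.choose_succ_right_eq i q
        have h2 : ((i - q : ℕ) : ℝ) = (i:ℝ) - q := by push_cast [h]; ring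
        rw [← h2]
        have h3 : ((i.choose (q+1) * (q+1) : ℕ) : ℝ) = ((i.choose q * (i - q) : ℕ) : ℝ) := by
          rw [this]
        push_cast at h3 ⊢
        linarith
      · have h1 : i.choose q = 0 := Nat.choose_eq_zero_of_lt h
        have h2 : i.choose (q+1) = 0 := Nat.choose_eq_zero_of_lt (by omega)
        simp [h1, h2]
    have hq : (Polynomial.X * (Polynomial.X * Polynomial.derivative (jP i (a+1) (b+1)))).coeff (q+1)
        = q * jr i (a+1) (b+1) q := by
      rw [Polynomial.coeff_X_mul]
      rcases q with _ | q
      · simp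
      · rw [Polynomial.coeff_X_mul, Polynomial.coeff_derivative, jP_coeff]; push_cast; ring
    simp only [Polynomial.coeff_sub, Polynomial.coeff_add, Polynomial.coeff_C_mul, hq]
    simp only [Polynomial.coeff_X_mul, jP_coeff, Polynomial.coeff_derivative]
    unfold jr
    have e1 : b + (i + 1) = b + 1 + i := by ring
    have e2 : b + 1 + (q + 1) = (b + (q + 1)) + 1 := by ring
    have e3 : a + 1 + (b + 1) + i + (q + 1) = (a + b + (i + 1) + (q + 1)) + 1 := by ring
    have e4 : a + 1 + (b + 1) + i = (a + b + (i + 1)) + 1 := by ring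
    have e5 : a + 1 + (b + 1) + i + q = (a + b + (i + 1) + (q + 1)) := by ring
    have e6 : b + 1 + q = b + (q + 1) := by ring
    rw [e3, e5, e4, e1, e2, e6]
    rw [Nat.factorial_succ (b + (q+1)), Nat.factorial_succ (a + b + (i + 1) + (q + 1)),
      Nat.factorial_succ (a + b + (i+1)), Nat.choose_succ_succ]
    have p1 : ((b + (q+1))! : ℝ) ≠ 0 := by positivity
    have p2 : ((a + b + (i+1))! : ℝ) ≠ 0 := by positivity
    generalize ((b + (q+1))! : ℕ) = F1 at *
    generalize ((a + b + (i+1))! : ℕ) = F2 at *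
    generalize ((a + b + (i+1) + (q+1))! : ℕ) = F3 at *
    generalize ((b + 1 + i)! : ℕ) = F4 at *
    push_cast
    rw [pow_succ]
    generalize ((i.choose (q+1) : ℕ) : ℝ) = c1 at *
    generalize ((i.choose q : ℕ) : ℝ) = c0 at *
    have p3 : (a:ℝ) + b + (i + 1) + 1 ≠ 0 := by positivity
    have p4 : (b:ℝ) + (q + 1) + 1 ≠ 0 := by positivity
    field_simp
    linear_combination ((F4:ℝ) * F3 * (b + q + 2)) * key

lemma jac_deriv (i : ℕ) : ∀ a b : ℕ,
    iteratedDeriv i (fun y : ℝ => (1 - y) ^ (a + i) * (1 + y) ^ (b + i)) =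
      fun x => 2 ^ i * ((1 - x) ^ a * (1 + x) ^ b * (jP i a b).eval ((1 + x) / 2)) := by
  induction i with
  | zero => 
    intro a b
    funext x
    have : jP 0 a b = 1 := by
      unfold jP jr; simp; field_simp
      simp
    simp [this]
  | succ i ih =>
    intro a b
    have e : (fun y : ℝ => (1 - y) ^ (a + (i+1)) * (1 + y) ^ (b + (i+1))) =
      (fun y : ℝ => (1 - y) ^ ((a+1) + i) * (1 + y) ^ ((b+1) + i)) := by
      funext y; congr 2 <;> ring
    rw [iteratedDeriv_succ, e, ih (a+1) (b+1)]
    funext x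
    have h1 : HasDerivAt (fun x : ℝ => (1 - x)^(a+1)) (((a+1 : ℕ):ℝ) * (1-x)^a * (-1)) x := by
      have := ((hasDerivAt_id x).const_sub 1).fun_pow (a+1)
      simpa using this
    have h2 : HasDerivAt (fun x : ℝ => (1 + x)^(b+1)) (((b+1 : ℕ):ℝ) * (1+x)^b * 1) x := by
      have := ((hasDerivAt_id x).const_add 1).fun_pow (b+1)
      simpa using this
    have h3 : HasDerivAt (fun x : ℝ => (jP i (a+1) (b+1)).eval ((1 + x) / 2))
        ((Polynomial.derivative (jP i (a+1) (b+1))).eval ((1 + x) / 2) * (1/2)) x := by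
      have h4 : HasDerivAt (fun x : ℝ => (1 + x)/2) (1/2) x := by
        simpa using ((hasDerivAt_id x).const_add 1).div_const 2
      exact HasDerivAt.comp x (Polynomial.hasDerivAt (jP i (a+1) (b+1)) ((1 + x) / 2)) h4
    rw [(((h1.fun_mul h2).fun_mul h3).const_mul (2^i)).deriv]
    rw [jP_succ]
    simp only [Polynomial.eval_sub, Polynomial.eval_add, Polynomial.eval_mul, Polynomial.eval_C,
      Polynomial.eval_X]
    push_cast
    ring

/-- explicit coefficients of the Jacobi polynomial in powers of `w`. -/
noncomputable def jc (k a b q : ℕ) : ℝ :=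
  (-1) ^ (k + q) * ((k + b)! : ℝ) * ((k + a + b + q)! : ℝ) /
    (((k - q)! : ℝ) * (q ! : ℝ) * ((b + q)! : ℝ) * ((k + a + b)! : ℝ))

lemma poly_ext_Ioo {p q : Polynomial ℝ} (h : ∀ x ∈ Set.Ioo (-1 : ℝ) 1, p.eval x = q.eval x) :
    p = q := by
  apply Polynomial.eq_of_infinite_eval_eq
  exact (Set.Ioo_infinite (by norm_num : (-1:ℝ) < 1)).mono h

lemma jac_explicit {J : ℕ → ℕ → ℕ → ℝ → ℝ} (hJ : IsJacobi J) (k a b : ℕ) (w : ℝ) :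
    J k a b (2 * w - 1) = ∑ q ∈ Finset.range (k + 1), jc k a b q * w ^ q := by
  obtain ⟨⟨p, hp⟩, hf⟩ := hJ k a b
  let p2 : Polynomial ℝ := Polynomial.C ((-1)^k / (k ! : ℝ)) *
    (jP k a b).comp (Polynomial.C (1/2) * (1 + Polynomial.X))
  have he : ∀ x, p2.eval x = (-1)^k / (k ! : ℝ) * (jP k a b).eval ((1 + x)/2) := by
    intro x
    simp [p2]
    left
    congr 1; ring
  have hpp : p = p2 := by
    apply poly_ext_Ioo
    intro x hx
    rw [← hp, hf x hx, jacobiFormula, jac_deriv, he]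
    have h1 : (1 - x) ≠ 0 := by have := hx.2; intro h; linarith
    have h2 : (1 + x) ≠ 0 := by have := hx.1; intro h; linarith
    simp only [zpow_neg, zpow_natCast]
    field_simp
  rw [hp, hpp, he]
  have : (1 + (2 * w - 1))/2 = w := by ring
  rw [this, jP, Polynomial.eval_finsetSum, Finset.mul_sum]
  apply Finset.sum_congr rfl
  intro q hq
  have hq : q ≤ k := by simp at hq; omega
  rw [Polynomial.eval_monomial, jr, jc, Nat.cast_choose ℝ hq, pow_add]
  have e1 : k + b = b + k := by ring
  have e2 : k + a + b = a + b + k := by ring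
  rw [e1, e2]
  field_simp

lemma shift_sum (i : ℕ) (A B D : ℕ → ℝ) (h0 : D 0 = A 0)
    (hs : ∀ s, 2 * (s + 1) ≤ i → D (s + 1) = A (s + 1) + B s)
    (he : ∀ a, i = 2 * a → B a = 0) (ho : ∀ a, i = 2 * a + 1 → D (a + 1) = B a) :
    ∑ s ∈ Finset.range (i / 2 + 1), (A s + B s) = ∑ s ∈ Finset.range ((i + 1) / 2 + 1), D s := by
  have h1 : ∑ s ∈ Finset.range (i / 2 + 1), (A s + B s) =
      ∑ s ∈ Finset.range (i / 2 + 1), D s + B (i / 2) := by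
    rw [Finset.sum_add_distrib, Finset.sum_range_succ' A, Finset.sum_range_succ B,
      Finset.sum_range_succ' D, h0]
    have : ∑ s ∈ Finset.range (i/2), D (s + 1) = ∑ s ∈ Finset.range (i/2), (A (s+1) + B s) := by
      apply Finset.sum_congr rfl
      intro s h
      apply hs
      simp at h
      omega
    rw [this, Finset.sum_add_distrib]
    ring
  rw [h1]
  rcases Nat.even_or_odd' i with ⟨a, rfl | rfl⟩
  · have e1 : 2 * a / 2 = a := by omega
    have e2 : (2 * a + 1) / 2 = a := by omega
    rw [e1, e2, he a rfl, add_zero]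
  · have e1 : (2 * a + 1) / 2 = a := by omega
    have e2 : (2 * a + 1 + 1) / 2 = a + 1 := by omega
    rw [e1, e2, Finset.sum_range_succ D (a + 1), ho a rfl]

noncomputable def gc (i l s : ℕ) : ℝ :=
  (-1) ^ s * ((l + i - s)! : ℝ) / ((s ! : ℝ) * ((i - 2 * s)! : ℝ))

noncomputable def gG (i l : ℕ) (x : ℝ) : ℝ :=
  ∑ s ∈ Finset.range (i / 2 + 1), gc i l s * (2 * x) ^ (i - 2 * s)

noncomputable def gG' (i l : ℕ) (x : ℝ) : ℝ :=
  ∑ s ∈ Finset.range (i / 2 + 1),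
    gc i l s * (((i - 2 * s : ℕ) : ℝ) * (2 * x) ^ (i - 2 * s - 1) * 2)

lemma gG_deriv (i l : ℕ) (x : ℝ) : HasDerivAt (gG i l) (gG' i l x) x := by
  unfold gG gG'
  apply HasDerivAt.fun_sum
  intro s _
  apply HasDerivAt.const_mul
  have := ((hasDerivAt_id x).const_mul 2).fun_pow (i - 2 * s)
  simpa using this

lemma gG_succ (i l : ℕ) (x : ℝ) :
    (1 - x ^ 2) * gG' i (l + 1) x - (2 * l + 3) * x * gG i (l + 1) x =
      -((2 * l + i + 3) * (i + 1) / 2) * gG (i + 1) l x := by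
  unfold gG gG'
  rw [Finset.mul_sum, Finset.mul_sum, Finset.mul_sum, ← Finset.sum_sub_distrib]
  rw [← shift_sum i
    (fun s => -(gc i (l+1) s) * (((i - 2 * s : ℕ) : ℝ) + 2 * l + 3) / 2 * (2 * x) ^ (i - 2 * s + 1))
    (fun s => gc i (l+1) s * (2 * ((i - 2 * s : ℕ) : ℝ)) * (2 * x) ^ (i - 2 * s - 1))
    (fun s => -((2 * l + i + 3) * (i + 1) / 2) *
      (gc (i+1) l s * (2 * x) ^ (i + 1 - 2 * s)))]
  · apply Finset.sum_congr rfl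
    intro s _
    generalize i - 2 * s = p
    rcases p with _ | p
    · simp; ring
    · simp only [Nat.add_sub_cancel]
      push_cast
      ring
  · simp only [gc, pow_zero, mul_zero, Nat.sub_zero, Nat.factorial_zero, Nat.factorial_succ i]
    rw [show l + 1 + i = l + (i + 1) by ring]
    push_cast
    field_simp
    ring
  · intro s hs
    obtain ⟨p, rfl⟩ := Nat.exists_eq_add_of_le hs
    simp only [gc]
    rw [show 2 * (s + 1) + p + 1 - 2 * (s + 1) = p + 1 by omega,
      show 2 * (s + 1) + p - 2 * (s + 1) = p by omega,
      show 2 * (s + 1) + p - 2 * s = p + 2 by omega,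
      show l + (2 * (s + 1) + p + 1) - (s + 1) = l + s + p + 2 by omega,
      show l + 1 + (2 * (s + 1) + p) - (s + 1) = l + s + p + 2 by omega,
      show l + 1 + (2 * (s + 1) + p) - s = (l + s + p + 2) + 1 by omega,
      show p + 2 - 1 = p + 1 by omega]
    simp only [Nat.factorial_succ s, Nat.factorial_succ (l + s + p + 2), Nat.factorial_succ (p + 1),
      Nat.factorial_succ p]
    push_cast
    rw [pow_succ]
    field_simp
    ring
  · intro a ha
    subst ha
    simp
  · intro s hs
    subst hs
    simp only [gc]
    rw [show 2 * s + 1 + 1 - 2 * (s + 1) = 0 by omega,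
      show 2 * s + 1 - 2 * s = 1 by omega,
      show l + (2 * s + 1 + 1) - (s + 1) = l + s + 1 by omega,
      show l + 1 + (2 * s + 1) - s = (l + s + 1) + 1 by omega]
    simp only [Nat.factorial_succ s, Nat.factorial_succ (l + s + 1)]
    push_cast
    rw [pow_succ]
    simp
    field_simp
    ring

noncomputable def gk (i l : ℕ) : ℝ :=
  (-1) ^ i * (i ! : ℝ) * ((2 * l + 2 * i + 1)! : ℝ) /
    (2 ^ i * ((2 * l + i + 1)! : ℝ) * ((l + i)! : ℝ))

lemma gk_succ (i l : ℕ) :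
    gk (i + 1) l = -((2 * l + i + 3) * (i + 1) / 2) * gk i (l + 1) := by
  unfold gk
  rw [show 2 * l + 2 * (i + 1) + 1 = 2 * l + 2 * i + 3 by ring,
    show 2 * (l + 1) + 2 * i + 1 = 2 * l + 2 * i + 3 by ring,
    show 2 * (l + 1) + i + 1 = (2 * l + (i + 1) + 1) + 1 by ring,
    show l + 1 + i = l + (i + 1) by ring]
  rw [Nat.factorial_succ i, Nat.factorial_succ (2 * l + (i + 1) + 1)]
  push_cast
  rw [pow_succ, pow_succ]
  field_simp
  ring

lemma geg_deriv (i : ℕ) : ∀ l : ℕ, ∀ x ∈ Set.Ioo (-1 : ℝ) 1,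
    iteratedDeriv i (fun y : ℝ => (1 - y ^ 2) ^ ((l : ℝ) + i + 1 / 2)) x =
      gk i l * ((1 - x ^ 2) ^ ((l : ℝ) + 1 / 2) * gG i l x) := by
  induction i with
  | zero =>
    intro l x hx
    simp [gk, gG, gc]
    field_simp
  | succ i ih =>
    intro l x hx
    rw [iteratedDeriv_succ]
    have e : (fun y : ℝ => (1 - y ^ 2) ^ ((l : ℝ) + (i + 1 : ℕ) + 1 / 2)) =
      (fun y : ℝ => (1 - y ^ 2) ^ (((l + 1 : ℕ) : ℝ) + i + 1 / 2)) := by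
      funext y; congr 1; push_cast; ring
    rw [e]
    have hev : iteratedDeriv i (fun y : ℝ => (1 - y ^ 2) ^ (((l + 1 : ℕ) : ℝ) + i + 1 / 2)) =ᶠ[𝓝 x]
      fun x => gk i (l+1) * ((1 - x ^ 2) ^ (((l + 1 : ℕ) : ℝ) + 1 / 2) * gG i (l+1) x) := by
      filter_upwards [isOpen_Ioo.mem_nhds hx] with z hz
      exact ih (l+1) z hz
    rw [hev.deriv_eq]
    have hpos : 0 < 1 - x ^ 2 := by nlinarith [hx.1, hx.2]
    have h1 : HasDerivAt (fun x : ℝ => 1 - x ^ 2) (-(2 * x)) x := by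
      have := ((hasDerivAt_id x).fun_pow 2).const_sub 1
      simpa using this
    have h2 := h1.rpow_const (p := ((l + 1 : ℕ) : ℝ) + 1 / 2) (Or.inl hpos.ne')
    rw [((h2.fun_mul (gG_deriv i (l+1) x)).const_mul (gk i (l+1))).deriv]
    have e1 : ((l + 1 : ℕ) : ℝ) + 1 / 2 - 1 = (l : ℝ) + 1 / 2 := by push_cast; ring
    have e2 : ((l + 1 : ℕ) : ℝ) + 1 / 2 = ((l : ℝ) + 1 / 2) + 1 := by push_cast; ring
    rw [e1, e2, Real.rpow_add_one hpos.ne', gk_succ]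
    have := gG_succ i l x
    linear_combination gk i (l+1) * (1 - x ^ 2) ^ ((l : ℝ) + 1 / 2) * this

lemma geg_const (n m : ℕ) :
    ((-1 : ℝ) ^ m / 2 ^ m) *
    (Real.Gamma ((m : ℝ) + 4 * n + 2) * Real.Gamma (2 * (n : ℝ) + 3 / 2) /
      (Real.Gamma (4 * (n : ℝ) + 2) * Real.Gamma ((m : ℝ) + 1) *
        Real.Gamma (2 * (n : ℝ) + m + 3 / 2))) * gk m (2 * n) = 1 / ((2 * n)! : ℝ) := by
  have g1 : Real.Gamma ((m : ℝ) + 4 * n + 2) = ((2 * (2 * n) + m + 1)! : ℝ) := by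
    rw [← Real.Gamma_nat_eq_factorial]; congr 1; push_cast; ring
  have g2 : Real.Gamma (4 * (n : ℝ) + 2) = ((2 * (2 * n) + 1)! : ℝ) := by
    rw [← Real.Gamma_nat_eq_factorial]; congr 1; push_cast; ring
  rw [g1, g2, Real.Gamma_nat_eq_factorial]
  have hkey : Real.Gamma (2 * (n : ℝ) + 3 / 2) * ((2 * (2 * n) + 2 * m + 1)! : ℝ) * ((2 * n)! : ℝ) =
      4 ^ m * ((2 * (2 * n) + 1)! : ℝ) * Real.Gamma (2 * (n : ℝ) + m + 3 / 2) *
        ((2 * n + m)! : ℝ) := by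
    induction m with
    | zero => simp only [Nat.cast_zero, mul_zero, add_zero, pow_zero]; ring
    | succ m ih =>
      have ih := ih (by rw [← Real.Gamma_nat_eq_factorial]; congr 1; push_cast; ring)
      have hG : Real.Gamma (2 * (n : ℝ) + (m + 1 : ℕ) + 3 / 2) =
        (2 * (n : ℝ) + m + 3 / 2) * Real.Gamma (2 * (n : ℝ) + m + 3 / 2) := by
        rw [← Real.Gamma_add_one (by positivity)]; congr 1; push_cast; ring
      rw [hG, show 2 * (2 * n) + 2 * (m + 1) + 1 = (2 * (2 * n) + 2 * m + 1) + 1 + 1 by ring,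
        Nat.factorial_succ, Nat.factorial_succ, show 2 * n + (m + 1) = 2 * n + m + 1 by ring,
        Nat.factorial_succ (2 * n + m), pow_succ]
      push_cast
      linear_combination ((2 * (2 * n) + 2 * m + 1 + 1 + 1) * (2 * (2 * n) + 2 * m + 1 + 1) : ℝ) * ih
  have hp : Real.Gamma (2 * (n : ℝ) + m + 3 / 2) ≠ 0 := (Real.Gamma_pos_of_pos (by positivity)).ne'
  unfold gk
  have h4 : (4:ℝ) ^ m = 2 ^ m * 2 ^ m := by rw [← mul_pow]; norm_num
  rw [h4] at hkey
  have hm : ((-1:ℝ) ^ m) ^ 2 = 1 := by rw [← pow_mul, mul_comm, pow_mul]; simp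
  generalize Real.Gamma (2 * (n : ℝ) + m + 3 / 2) = G1 at *
  generalize Real.Gamma (2 * (n : ℝ) + 3 / 2) = G2 at *
  field_simp
  rw [hm]
  linear_combination hkey

lemma geg_explicit {n : ℕ} {C : ℕ → ℝ → ℝ} (hC : IsGegenbauer n C) (j : ℕ) (x : ℝ) :
    C j x = 1 / ((2 * n)! : ℝ) * gG j (2 * n) x := by
  obtain ⟨⟨p, hp⟩, hf⟩ := hC j
  let p2 : Polynomial ℝ := Polynomial.C (1 / ((2 * n)! : ℝ)) *
    ∑ s ∈ Finset.range (j / 2 + 1), Polynomial.C (gc j (2 * n) s) *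
      (Polynomial.C 2 * Polynomial.X) ^ (j - 2 * s)
  have he : ∀ x, p2.eval x = 1 / ((2 * n)! : ℝ) * gG j (2 * n) x := by
    intro x
    simp [p2, gG, Polynomial.eval_finsetSum]
  have hpp : p = p2 := by
    apply poly_ext_Ioo
    intro x hx
    rw [← hp, hf x hx, gegenbauerFormula, he, ← geg_const n j]
    have := geg_deriv j (2 * n) x hx
    push_cast at this
    rw [this]
    have hpos : 0 < 1 - x ^ 2 := by nlinarith [hx.1, hx.2]
    rw [Real.rpow_neg hpos.le]
    have := (Real.rpow_pos_of_pos hpos (2 * (n:ℝ) + 1 / 2)).ne'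
    field_simp
  rw [hp, hpp, he]

noncomputable def bb (q m : ℕ) : ℝ :=
  ((m : ℝ) + 1) * ((m + 2 * q)! : ℝ) / ((q ! : ℝ) * ((m + q + 1)! : ℝ))

lemma V_pow (V : ℕ → ℝ) (X : ℝ) (h0 : V 0 = 0) (hV : ∀ m, V (m + 2) = X * V (m + 1) - V m)
    (p : ℕ) : X ^ p * V 1 =
      ∑ q ∈ Finset.range (p / 2 + 1), bb q (p - 2 * q) * V (p - 2 * q + 1) := by
  induction p with
  | zero => simp [bb]
  | succ p ih =>
    rw [pow_succ', mul_assoc, ih, Finset.mul_sum,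
      ← shift_sum p (fun q => bb q (p - 2 * q) * V (p - 2 * q + 2))
        (fun q => bb q (p - 2 * q) * V (p - 2 * q))]
    · apply Finset.sum_congr rfl
      intro q _
      rw [hV]; ring
    · simp only [mul_zero, Nat.sub_zero]
      congr 1
      simp only [bb, Nat.factorial_succ]
      simp
      field_simp
    · intro s hs
      obtain ⟨r, rfl⟩ := Nat.exists_eq_add_of_le hs
      rw [show 2 * (s + 1) + r + 1 - 2 * (s + 1) = r + 1 by omega,
        show 2 * (s + 1) + r - 2 * (s + 1) = r by omega,
        show 2 * (s + 1) + r - 2 * s = r + 2 by omega, ← add_mul]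
      congr 1
      simp only [bb]
      rw [show r + 1 + 2 * (s + 1) = r + 2 * s + 2 + 1 by ring,
        show r + 1 + (s + 1) + 1 = r + s + 2 + 1 by ring,
        show r + (s + 1) + 1 = r + s + 2 by ring,
        show r + 2 * (s + 1) = r + 2 * s + 2 by ring,
        show r + 2 + 2 * s = r + 2 * s + 2 by ring,
        show r + 2 + s + 1 = r + s + 2 + 1 by ring]
      simp only [Nat.factorial_succ s, Nat.factorial_succ (r + 2 * s + 2),
        Nat.factorial_succ (r + s + 2)]
      push_cast
      field_simp
      ring
    · intro a ha
      subst ha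
      simp [h0]
    · intro s hs
      subst hs
      rw [show 2 * s + 1 + 1 - 2 * (s + 1) = 0 by omega, show 2 * s + 1 - 2 * s = 1 by omega]
      congr 1
      simp only [bb]
      rw [show 0 + 2 * (s + 1) = 2 * s + 1 + 1 by ring,
        show 0 + (s + 1) + 1 = s + 1 + 1 by ring,
        show 1 + 2 * s = 2 * s + 1 by ring,
        show 1 + s + 1 = s + 1 + 1 by ring]
      simp only [Nat.factorial_succ s, Nat.factorial_succ (2 * s + 1)]
      push_cast
      field_simp
      ring

lemma gG_cheb (i : ℕ) (x : ℝ) :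
    gG (i + 2) 0 x = 2 * x * gG (i + 1) 0 x - gG i 0 x := by
  have hB : gG i 0 x = ∑ s ∈ Finset.range ((i + 1) / 2 + 1),
      (if 2 * s ≤ i then gc i 0 s * (2 * x) ^ (i - 2 * s) else 0) := by
    unfold gG
    rw [← Finset.sum_filter]
    apply Finset.sum_congr _ (fun _ _ => rfl)
    ext s
    simp
    omega
  rw [hB]
  unfold gG
  rw [Finset.mul_sum, ← Finset.sum_sub_distrib]
  simp only [sub_eq_add_neg]
  rw [shift_sum (i + 1)]
  · simp only [gc, mul_zero, Nat.sub_zero, pow_zero, Nat.factorial_zero, zero_add]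
    rw [pow_succ]
    field_simp
  · intro s hs
    obtain ⟨r, hr⟩ := Nat.exists_eq_add_of_le hs
    have hi : i = 2 * s + 1 + r := by omega
    subst hi
    rw [if_pos (by omega)]
    simp only [gc]
    rw [show 2 * s + 1 + r + 1 + 1 - 2 * (s + 1) = r + 1 by omega,
      show 2 * s + 1 + r + 1 - 2 * (s + 1) = r by omega,
      show 2 * s + 1 + r - 2 * s = r + 1 by omega,
      show 0 + (2 * s + 1 + r + 1 + 1) - (s + 1) = s + r + 1 + 1 by omega,
      show 0 + (2 * s + 1 + r + 1) - (s + 1) = s + r + 1 by omega,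
      show 0 + (2 * s + 1 + r) - s = s + r + 1 by omega]
    simp only [Nat.factorial_succ s, Nat.factorial_succ (s + r + 1), Nat.factorial_succ r]
    push_cast
    rw [pow_succ]
    field_simp
    ring
  · intro a ha
    rw [if_neg (by omega)]; simp
  · intro s hs
    have : i = 2 * s := by omega
    subst this
    rw [if_pos le_rfl]
    simp only [gc]
    rw [show 2 * s + 1 + 1 - 2 * (s + 1) = 0 by omega, show 2 * s - 2 * s = 0 by omega,
      show 0 + (2 * s + 1 + 1) - (s + 1) = s + 1 by omega,
      show 0 + 2 * s - s = s by omega]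
    simp only [Nat.factorial_succ s]
    push_cast
    rw [pow_succ]
    field_simp

lemma V_expl (V : ℕ → ℝ) (x : ℝ) (h0 : V 0 = 0)
    (hV : ∀ m, V (m + 2) = 2 * x * V (m + 1) - V m) (m : ℕ) :
    V (m + 1) = gG m 0 x * V 1 := by
  induction m using Nat.twoStepInduction with
  | zero => simp [gG, gc]
  | one =>
    rw [hV, h0]; simp [gG, gc]
  | more m h1 h2 =>
    rw [hV, h1, h2, gG_cheb]; ring

lemma sin_eq_gG (m : ℕ) (u : ℝ) :
    Real.sin ((m + 1) * u) = gG m 0 (Real.cos u) * Real.sin u := by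
  have := V_expl (fun m => Real.sin (m * u)) (Real.cos u) (by simp) (by
    intro m
    push_cast
    rw [show ((m:ℝ) + 2) * u = (m + 1) * u + u by ring,
      show ((m:ℝ)) * u = (m + 1) * u - u by ring, Real.sin_add, Real.sin_sub]
    ring) m
  simpa using this

lemma int_cos_pow_even (l : ℕ) :
    ∫ θ in (0:ℝ)..π, (2 * Real.cos θ) ^ (2 * l) = π * ((2 * l)! : ℝ) / ((l ! : ℝ) * (l ! : ℝ)) := by
  simp only [mul_pow]
  rw [intervalIntegral.integral_const_mul]
  induction l with
  | zero => simp
  | succ l ih =>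
    rw [show 2 * (l + 1) = 2 * l + 2 by ring, integral_cos_pow]
    simp only [Real.sin_pi, Real.sin_zero, mul_zero, sub_zero, zero_div, zero_add]
    rw [show 2 * l + 2 = 2 * l + 1 + 1 by ring, Nat.factorial_succ (2 * l + 1),
      Nat.factorial_succ (2 * l), Nat.factorial_succ l]
    rw [pow_succ, pow_succ]
    push_cast
    have h := ih
    field_simp at h ⊢
    linear_combination 2 * ((l:ℝ) + 1) * h

lemma int_cos_pow_odd (l : ℕ) :
    ∫ θ in (0:ℝ)..π, (2 * Real.cos θ) ^ (2 * l + 1) = 0 := by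
  simp only [mul_pow]
  rw [intervalIntegral.integral_const_mul]
  induction l with
  | zero => simp
  | succ l ih =>
    have h : ∫ θ in (0:ℝ)..π, Real.cos θ ^ (2 * l + 1) = 0 := by
      rcases mul_eq_zero.mp ih with h | h
      · exact absurd h (by positivity)
      · exact h
    rw [show 2 * (l + 1) + 1 = 2 * l + 1 + 2 by ring, integral_cos_pow, h]
    simp

lemma int_gG (m : ℕ) (c : ℝ) :
    ∫ θ in (0:ℝ)..π, gG m 0 (c * Real.cos θ) =
      ∑ s ∈ Finset.range (m / 2 + 1), gc m 0 s * c ^ (m - 2 * s) *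
        ∫ θ in (0:ℝ)..π, (2 * Real.cos θ) ^ (m - 2 * s) := by
  unfold gG
  rw [intervalIntegral.integral_finsetSum]
  · apply Finset.sum_congr rfl
    intro s _
    rw [← intervalIntegral.integral_const_mul]
    congr 1
    funext θ
    rw [mul_assoc, ← mul_pow]; congr 2; ring
  · intro s _
    apply Continuous.intervalIntegrable
    fun_prop

lemma int_gG_odd (l : ℕ) (c : ℝ) : ∫ θ in (0:ℝ)..π, gG (2 * l + 1) 0 (c * Real.cos θ) = 0 := by
  rw [int_gG]
  apply Finset.sum_eq_zero
  intro s hs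
  have : 2 * l + 1 - 2 * s = 2 * (l - s) + 1 := by simp at hs; omega
  rw [this, int_cos_pow_odd, mul_zero]

lemma int_gG_even {J : ℕ → ℕ → ℕ → ℝ → ℝ} (hJ : IsJacobi J) (l : ℕ) (c : ℝ) :
    ∫ θ in (0:ℝ)..π, gG (2 * l) 0 (c * Real.cos θ) = π * J l 0 0 (2 * c ^ 2 - 1) := by
  rw [int_gG, jac_explicit hJ, ← Finset.sum_range_reflect, Finset.mul_sum,
    show 2 * l / 2 + 1 = l + 1 by omega]
  apply Finset.sum_congr rfl
  intro q hq
  obtain ⟨s, rfl⟩ := Nat.exists_eq_add_of_le (show q ≤ l by simp at hq; omega)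
  rw [show q + s + 1 - 1 - q = s by omega, show 2 * (q + s) - 2 * s = 2 * q by omega,
    int_cos_pow_even]
  simp only [gc, jc]
  rw [show 0 + 2 * (q + s) - s = 2 * q + s by omega, show 2 * (q + s) - 2 * s = 2 * q by omega,
    show q + s - q = s by omega]
  simp only [add_zero, zero_add]
  rw [show q + s + q = 2 * q + s by ring, ← pow_mul, pow_add, pow_mul]
  field_simp
  simp

noncomputable def tc (n k m i : ℕ) : ℝ :=
  (-1) ^ i * ((2 * n + m + 2 * k - i)! : ℝ) * (m + 1) /
    (((2 * n)! : ℝ) * (i ! : ℝ) * ((k - i)! : ℝ) * ((m + k - i + 1)! : ℝ))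

noncomputable def tT (n k m : ℕ) (w : ℝ) : ℝ :=
  ∑ i ∈ Finset.range (k + 1), tc n k m i * w ^ (k - i)

lemma tT_eq {J : ℕ → ℕ → ℕ → ℝ → ℝ} (hJ : IsJacobi J) (n : ℕ) (hn : 1 ≤ n) (k m : ℕ) (w : ℝ) :
    tT n k m w = ((m : ℝ) + 1) / (2 * n) * (Nat.choose (k + m + 2 * n) (2 * n - 1) : ℝ) *
      J k (2 * n - 1) (m + 1) (2 * w - 1) := by
  obtain ⟨N, rfl⟩ := Nat.exists_eq_add_of_le' hn
  rw [jac_explicit hJ, tT, ← Finset.sum_range_reflect, Finset.mul_sum]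
  apply Finset.sum_congr rfl
  intro q hq
  obtain ⟨s, rfl⟩ := Nat.exists_eq_add_of_le (show q ≤ k by simp at hq; omega)
  rw [Nat.cast_choose ℝ (by omega)]
  simp only [tc, jc]
  rw [show q + s + 1 - 1 - q = s by omega, show q + s - s = q by omega,
    show q + s - q = s by omega,
    show 2 * (N + 1) + m + 2 * (q + s) - s = 2 * N + m + 2 * q + s + 2 by omega,
    show m + (q + s) - s + 1 = m + q + 1 by omega,
    show 2 * (N + 1) - 1 = 2 * N + 1 by omega,
    show q + s + m + 2 * (N + 1) - (2 * N + 1) = q + s + m + 1 by omega,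
    show q + s + (2 * N + 1) + (m + 1) = q + s + m + 2 * (N + 1) by omega,
    show q + s + (m + 1) = q + s + m + 1 by omega,
    show q + s + m + 2 * (N + 1) + q = 2 * N + m + 2 * q + s + 2 by omega,
    show m + 1 + q = m + q + 1 by omega,
    show 2 * (N + 1) = 2 * N + 1 + 1 by omega,
    Nat.factorial_succ (2 * N + 1)]
  have h1 : (-1:ℝ) ^ (q + s + q) = (-1) ^ s := by
    rw [show q + s + q = 2 * q + s by ring, pow_add, pow_mul]; simp
  rw [h1]
  push_cast
  field_simp
  ring

lemma sinh_decomp {n : ℕ} {C : ℕ → ℝ → ℝ} (hC : IsGegenbauer n C) (j : ℕ) (s y : ℝ) :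
    Real.sinh y * C j (s * Real.cosh y) = ∑ k ∈ Finset.range (j / 2 + 1),
      tT n k (j - 2 * k) (s ^ 2) * s ^ (j - 2 * k) * Real.sinh (((j - 2 * k : ℕ) + 1) * y) := by
  have hV := V_pow (fun m => Real.sinh (m * y)) (2 * Real.cosh y) (by simp) (by
    intro m
    push_cast
    rw [show ((m:ℝ) + 2) * y = (m + 1) * y + y by ring,
      show ((m:ℝ)) * y = (m + 1) * y - y by ring, Real.sinh_add, Real.sinh_sub]
    ring)
  simp only [Nat.cast_one, one_mul] at hV
  rw [geg_explicit hC, gG]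
  have h1 : Real.sinh y * (1 / ((2 * n)! : ℝ) * ∑ i ∈ Finset.range (j / 2 + 1),
      gc j (2 * n) i * (2 * (s * Real.cosh y)) ^ (j - 2 * i)) =
      ∑ i ∈ Finset.range (j / 2 + 1), ∑ q ∈ Finset.range (j / 2 + 1 - i),
        1 / ((2 * n)! : ℝ) * gc j (2 * n) i * s ^ (j - 2 * i) * (bb q (j - 2 * (i + q)) *
          Real.sinh (((j - 2 * (i + q) + 1 : ℕ):ℝ) * y)) := by
    rw [Finset.mul_sum, Finset.mul_sum]
    apply Finset.sum_congr rfl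
    intro i hi
    have hi : i ≤ j / 2 := by simp at hi; omega
    have := hV (j - 2 * i)
    rw [show 2 * (s * Real.cosh y) = s * (2 * Real.cosh y) by ring, mul_pow]
    rw [show j / 2 + 1 - i = (j - 2 * i) / 2 + 1 by omega, ← Finset.mul_sum]
    have h2 : ∀ q, j - 2 * (i + q) = j - 2 * i - 2 * q := by intro q; omega
    simp only [h2]
    rw [← this]
    ring
  rw [h1, ← Finset.sum_range_diag_flip (j / 2 + 1) (fun i q =>
    1 / ((2 * n)! : ℝ) * gc j (2 * n) i * s ^ (j - 2 * i) * (bb q (j - 2 * (i + q)) *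
          Real.sinh (((j - 2 * (i + q) + 1 : ℕ):ℝ) * y)))]
  apply Finset.sum_congr rfl
  intro k hk
  have hk : 2 * k ≤ j := by simp at hk; omega
  rw [tT, Finset.sum_mul, Finset.sum_mul]
  apply Finset.sum_congr rfl
  intro i hi
  obtain ⟨m, rfl⟩ := Nat.exists_eq_add_of_le hk
  obtain ⟨q, rfl⟩ := Nat.exists_eq_add_of_le (show i ≤ k by simp at hi; omega)
  rw [show i + q - i = q by omega, show 2 * (i + q) + m - 2 * (i + q) = m by omega]
  simp only [gc, bb, tc]
  rw [show 2 * (i + q) + m - 2 * i = m + 2 * q by omega,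
    show 2 * n + (2 * (i + q) + m) - i = 2 * n + m + 2 * (i + q) - i by omega,
    show m + (i + q) - i + 1 = m + q + 1 by omega, show i + q - i = q by omega,
    ← pow_mul, pow_add]
  push_cast
  field_simp

lemma cexp_im_aux (A B : ℝ) : (Complex.exp ((A : ℂ) + (B : ℂ) * Complex.I)).im =
    Real.exp A * Real.sin B := by
  rw [Complex.exp_im]; simp

lemma gauss_int (a b t : ℝ) (ht : 0 < t) :
    Integrable (fun y : ℝ => Complex.exp (-((1 / (4 * t) : ℝ) : ℂ) * y ^ 2 + (a + b * Complex.I) * y + 0)) ∧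
    ∫ y : ℝ, Complex.exp (-((1 / (4 * t) : ℝ) : ℂ) * y ^ 2 + (a + b * Complex.I) * y + 0) =
      ((Real.sqrt (4 * π * t) : ℝ) : ℂ) * Complex.exp ((t * (a + b * Complex.I) ^ 2 : ℂ)) := by
  have hb : 0 < (((1 / (4 * t) : ℝ) : ℂ)).re := by
    rw [Complex.ofReal_re]; positivity
  refine ⟨integrable_cexp_quadratic hb _ _, ?_⟩
  rw [integral_cexp_quadratic (by rw [Complex.neg_re]; linarith)]
  congr 1
  · rw [neg_neg, ← Complex.ofReal_div, Real.sqrt_eq_rpow, Complex.ofReal_cpow (by positivity)]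
    congr 2
    · field_simp
    · push_cast; rfl
  · congr 1
    have : (t:ℂ) ≠ 0 := by exact_mod_cast ht.ne'
    push_cast
    field_simp
    ring

lemma gauss_real (a t : ℝ) (ht : 0 < t) :
    Integrable (fun y : ℝ => Real.exp (a * y - y ^ 2 / (4 * t))) ∧
    ∫ y : ℝ, Real.exp (a * y - y ^ 2 / (4 * t)) = Real.sqrt (4 * π * t) * Real.exp (t * a ^ 2) := by
  obtain ⟨h1, h2⟩ := gauss_int a 0 t ht
  have e : (fun y : ℝ => Complex.exp (-((1 / (4 * t) : ℝ) : ℂ) * y ^ 2 + (a + (0:ℝ) * Complex.I) * y + 0))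
      = fun y : ℝ => ((Real.exp (a * y - y ^ 2 / (4 * t)) : ℝ) : ℂ) := by
    funext y
    rw [Complex.ofReal_exp]
    congr 1
    push_cast
    ring
  rw [e] at h1 h2
  refine ⟨by simpa only [RCLike.re_to_complex, Complex.ofReal_re] using h1.re, ?_⟩
  rw [integral_complex_ofReal] at h2
  have : ((t * (a + (0:ℝ) * Complex.I) ^ 2 : ℂ)) = ((t * a ^ 2 : ℝ) : ℂ) := by push_cast; ring
  rw [this, ← Complex.ofReal_exp, ← Complex.ofReal_mul] at h2
  exact_mod_cast h2

lemma gauss_sin (a b t : ℝ) (ht : 0 < t) :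
    Integrable (fun y : ℝ => Real.exp (a * y - y ^ 2 / (4 * t)) * Real.sin (b * y)) ∧
    ∫ y : ℝ, Real.exp (a * y - y ^ 2 / (4 * t)) * Real.sin (b * y) =
      Real.sqrt (4 * π * t) * (Real.exp (t * (a ^ 2 - b ^ 2)) * Real.sin (2 * a * b * t)) := by
  obtain ⟨h1, h2⟩ := gauss_int a b t ht
  have e : ∀ y : ℝ, (Complex.exp (-((1 / (4 * t) : ℝ) : ℂ) * y ^ 2 + (a + b * Complex.I) * y + 0)).im
      = Real.exp (a * y - y ^ 2 / (4 * t)) * Real.sin (b * y) := by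
    intro y
    have : (-((1 / (4 * t) : ℝ) : ℂ) * y ^ 2 + (a + b * Complex.I) * y + 0) =
      ((a * y - y ^ 2 / (4 * t) : ℝ) : ℂ) + ((b * y : ℝ) : ℂ) * Complex.I := by
      push_cast; ring
    rw [this, cexp_im_aux]
  have h3 := h1.im
  have h4 : (∫ y : ℝ, Complex.exp (-((1 / (4 * t) : ℝ) : ℂ) * y ^ 2 + (a + b * Complex.I) * y + 0)).im
    = ∫ y : ℝ, (Complex.exp (-((1 / (4 * t) : ℝ) : ℂ) * y ^ 2 + (a + b * Complex.I) * y + 0)).im := by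
    exact (integral_im h1).symm
  rw [h2] at h4
  simp only [e] at h4
  refine ⟨?_, ?_⟩
  · have : (fun y : ℝ => Real.exp (a * y - y ^ 2 / (4 * t)) * Real.sin (b * y)) =
      fun y : ℝ => RCLike.im (Complex.exp (-((1 / (4 * t) : ℝ) : ℂ) * y ^ 2 + (a + b * Complex.I) * y + 0)) := by
      funext y
      exact (e y).symm
    rw [this]; exact h3
  · rw [← h4, Complex.im_ofReal_mul]
    congr 1
    have : (t * (a + b * Complex.I) ^ 2 : ℂ) =
      ((t * (a ^ 2 - b ^ 2) : ℝ) : ℂ) + ((2 * a * b * t : ℝ) : ℂ) * Complex.I := by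
      push_cast
      linear_combination (t * b ^ 2 : ℂ) * Complex.I_sq
    rw [this, cexp_im_aux]

lemma gauss_half (a b t : ℝ) (ht : 0 < t) :
    ∫ y in Set.Ioi (0:ℝ), Real.sinh (a * y) * Real.sin (b * y) * Real.exp (-y ^ 2 / (4 * t)) =
      Real.sqrt (π * t) * (Real.exp (t * (a ^ 2 - b ^ 2)) * Real.sin (2 * a * b * t)) := by
  obtain ⟨i1, v1⟩ := gauss_sin a b t ht
  obtain ⟨i2, v2⟩ := gauss_sin (-a) b t ht
  have h := integral_comp_abs
    (f := fun y => Real.sinh (a * y) * Real.sin (b * y) * Real.exp (-y ^ 2 / (4 * t)))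
  have e : ∀ y : ℝ, Real.sinh (a * |y|) * Real.sin (b * |y|) * Real.exp (-|y| ^ 2 / (4 * t)) =
      1 / 2 * (Real.exp (a * y - y ^ 2 / (4 * t)) * Real.sin (b * y) -
        Real.exp (-a * y - y ^ 2 / (4 * t)) * Real.sin (b * y)) := by
    intro y
    have h1 : Real.sinh (a * |y|) * Real.sin (b * |y|) = Real.sinh (a * y) * Real.sin (b * y) := by
      rcases abs_choice y with h | h <;> rw [h]
      simp
    rw [h1, sq_abs, Real.sinh_eq, sub_eq_add_neg (a * y), sub_eq_add_neg (-a * y), Real.exp_add,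
      Real.exp_add]
    rw [show -y ^ 2 / (4 * t) = -(y ^ 2 / (4 * t)) by ring, show -(a * y) = -a * y by ring]
    ring
  simp only [e] at h
  rw [integral_const_mul, integral_sub i1 i2, v1, v2] at h
  have hs : Real.sqrt (4 * π * t) = 2 * Real.sqrt (π * t) := by
    rw [show 4 * π * t = 2 ^ 2 * (π * t) by ring, Real.sqrt_mul (by positivity),
      Real.sqrt_sq (by positivity)]
  rw [hs, show 2 * -a * b * t = -(2 * a * b * t) by ring, Real.sin_neg, neg_sq] at h
  linarith

lemma summable_g (P : ℕ) (c : ℝ) (hc : 0 < c) :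
    Summable (fun m : ℕ => ((m:ℝ) + 1) ^ P * Real.exp (-(c * m))) := by
  have hr : ‖Real.exp (-c)‖ < 1 := by
    rw [Real.norm_eq_abs, abs_of_pos (Real.exp_pos _), ← Real.exp_zero]
    exact Real.exp_lt_exp.mpr (by linarith)
  have h0 : Summable (fun m : ℕ => (m:ℝ) ^ P * Real.exp (-c) ^ m) :=
    summable_pow_mul_geometric_of_norm_lt_one P hr
  have h : Summable (fun m : ℕ => (((m + 1 : ℕ) : ℝ) ^ P * Real.exp (-c) ^ (m + 1))) :=
    (summable_nat_add_iff (f := fun m : ℕ => (m:ℝ) ^ P * Real.exp (-c) ^ m) 1).mpr h0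
  have h2 := h.mul_left (Real.exp c)
  have e : (fun m : ℕ => ((m:ℝ) + 1) ^ P * Real.exp (-(c * m))) =
      fun m : ℕ => Real.exp c * (((m + 1 : ℕ) : ℝ) ^ P * Real.exp (-c) ^ (m + 1)) := by
    funext m
    have h3 : Real.exp (-(c * m)) = Real.exp c * Real.exp (-c) ^ (m + 1) := by
      rw [← Real.exp_nat_mul, ← Real.exp_add]
      congr 1
      push_cast
      ring
    rw [h3]
    push_cast
    ring
  rw [e]
  exact h2

lemma summable_f (P : ℕ) (t : ℝ) (ht : 0 < t) :
    Summable (fun k : ℕ => ((k:ℝ) + 1) ^ P * ((1 / t) ^ k * Real.exp (-(t * k ^ 2)))) := by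
  have hg := summable_g P 1 one_pos
  have hlim : Tendsto (fun k : ℕ => (1 / t) * Real.exp (-(t * (k:ℝ)))) atTop (𝓝 0) := by
    rw [show (0:ℝ) = (1 / t) * 0 by ring]
    apply Tendsto.const_mul
    apply Real.tendsto_exp_neg_atTop_nhds_zero.comp
    exact tendsto_natCast_atTop_atTop.const_mul_atTop ht
  have hev := hlim.eventually (ge_mem_nhds (show (0:ℝ) < Real.exp (-1) by positivity))
  apply hg.of_norm_bounded_eventually_nat
  filter_upwards [hev] with k hk
  rw [Real.norm_eq_abs, abs_of_nonneg (by positivity)]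
  apply mul_le_mul_of_nonneg_left _ (by positivity)
  have : (1 / t) ^ k * Real.exp (-(t * k ^ 2)) = ((1 / t) * Real.exp (-(t * (k:ℝ)))) ^ k := by
    rw [mul_pow, ← Real.exp_nat_mul]; congr 2; ring
  rw [this, show -(1 * (k:ℝ)) = k * (-1) by ring, Real.exp_nat_mul]
  exact pow_le_pow_left₀ (by positivity) hk k

lemma tc_bound (n k m i : ℕ) (hn : 1 ≤ n) (hi : i ≤ k) :
    |tc n k m i| ≤ ((m:ℝ) + 1) * ((2 * n + m + 2 * k + 1 : ℕ) : ℝ) ^ (2 * n + k) := by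
  obtain ⟨q, rfl⟩ := Nat.exists_eq_add_of_le hi
  unfold tc
  rw [show i + q - i = q by omega, show m + (i + q) - i + 1 = m + q + 1 by omega,
    show 2 * n + m + 2 * (i + q) - i = 2 * n + m + 2 * q + i by omega]
  have h1 := Nat.factorial_mul_descFactorial
    (show 2 * n + q + i - 1 ≤ 2 * n + m + 2 * q + i by omega)
  rw [show 2 * n + m + 2 * q + i - (2 * n + q + i - 1) = m + q + 1 by omega] at h1
  have h2 : (2 * n + m + 2 * q + i).descFactorial (2 * n + q + i - 1) ≤
      (2 * n + m + 2 * (i + q) + 1) ^ (2 * n + (i + q)) := by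
    refine (Nat.descFactorial_le_pow _ _).trans ?_
    refine (Nat.pow_le_pow_left (show _ ≤ 2 * n + m + 2 * (i + q) + 1 by omega) _).trans ?_
    exact Nat.pow_le_pow_right (by omega) (by omega)
  rw [← h1]
  rw [abs_div, abs_mul, abs_mul, abs_pow, abs_neg, abs_one, one_pow, one_mul, abs_of_nonneg (by positivity),
    abs_of_nonneg (by positivity), abs_of_nonneg (by positivity)]
  rw [div_le_iff₀ (by positivity)]
  have f1 : (1:ℝ) ≤ ((2 * n)! : ℝ) := by exact_mod_cast Nat.one_le_iff_ne_zero.mpr (Nat.factorial_ne_zero _)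
  have f2 : (1:ℝ) ≤ (i ! : ℝ) := by exact_mod_cast Nat.one_le_iff_ne_zero.mpr (Nat.factorial_ne_zero _)
  have f3 : (1:ℝ) ≤ (q ! : ℝ) := by exact_mod_cast Nat.one_le_iff_ne_zero.mpr (Nat.factorial_ne_zero _)
  have f4 : (1:ℝ) ≤ ((2 * n)! : ℝ) * (i ! : ℝ) * (q ! : ℝ) :=
    one_le_mul_of_one_le_of_one_le (one_le_mul_of_one_le_of_one_le f1 f2) f3
  have h3 : (((2 * n + m + 2 * q + i).descFactorial (2 * n + q + i - 1) : ℕ) : ℝ) ≤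
    ((2 * n + m + 2 * (i + q) + 1 : ℕ) : ℝ) ^ (2 * n + (i + q)) := by exact_mod_cast h2
  rw [Nat.cast_mul]
  set D : ℝ := (((2 * n + m + 2 * q + i).descFactorial (2 * n + q + i - 1) : ℕ) : ℝ)
  set Y : ℝ := ((2 * n + m + 2 * (i + q) + 1 : ℕ) : ℝ) ^ (2 * n + (i + q))
  have hD : 0 ≤ D := Nat.cast_nonneg _
  have hY : 0 ≤ Y := hD.trans h3
  calc ((m + q + 1)! : ℝ) * D * (m + 1) = ((m:ℝ) + 1) * D * (1 * ((m + q + 1)! : ℝ)) := by ring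
    _ ≤ ((m:ℝ) + 1) * Y * ((((2 * n)! : ℝ) * (i ! : ℝ) * (q ! : ℝ)) * ((m + q + 1)! : ℝ)) := by
      gcongr

lemma tT_bound (n k m : ℕ) (hn : 1 ≤ n) (w : ℝ) (h0 : 0 ≤ w) (h1 : w ≤ 1) :
    |tT n k m w| ≤ ((k:ℝ) + 1) * (((m:ℝ) + 1) * ((2 * n + m + 2 * k + 1 : ℕ) : ℝ) ^ (2 * n + k)) := by
  unfold tT
  refine (Finset.abs_sum_le_sum_abs _ _).trans ?_
  refine (Finset.sum_le_card_nsmul _ _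
    (((m:ℝ) + 1) * ((2 * n + m + 2 * k + 1 : ℕ) : ℝ) ^ (2 * n + k)) ?_).trans ?_
  · intro i hi
    rw [abs_mul, abs_of_nonneg (pow_nonneg h0 _)]
    have := tc_bound n k m i hn (by simp at hi; omega)
    calc |tc n k m i| * w ^ (k - i) ≤ |tc n k m i| * 1 := by
          gcongr; exact pow_le_one₀ h0 h1
      _ ≤ _ := by rw [mul_one]; exact this
  · simp

/-- the summands, `p = (m, k)` -/
noncomputable def wW (n : ℕ) (t s : ℝ) (p : ℕ × ℕ) : ℝ :=
  (Real.Gamma (2 * n + 1) / (2 * Real.pi ^ (2 * n + 2))) *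
    (2 * (p.2 : ℝ) + p.1 + 2 * n + 1) * tT n p.2 p.1 (s ^ 2) * s ^ p.1 *
    Real.exp (-(4 * (p.2 : ℝ) * (p.2 + p.1 + 2 * n + 1) + 4 * n * p.1) * t)

lemma wW_summable (n : ℕ) (hn : 1 ≤ n) (t s : ℝ) (ht : 0 < t) (h0 : 0 ≤ s) (h1 : s ≤ 1) :
    Summable (fun p => |wW n t s p|) := by
  have hg := summable_g (2 * n + 2) (4 * n * t) (by positivity)
  have hf := summable_f (2 * n + 2) t ht
  have hm := (hg.mul_of_nonneg hf (fun _ => by positivity) (fun _ => by positivity)).mul_left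
    ((Real.Gamma (2 * n + 1) / (2 * Real.pi ^ (2 * n + 2))) * (2 * n + 1) ^ (2 * n + 1))
  refine Summable.of_nonneg_of_le (fun _ => abs_nonneg _) ?_ hm
  rintro ⟨m, k⟩
  have hG : 0 < Real.Gamma (2 * n + 1) / (2 * Real.pi ^ (2 * n + 2)) := by
    have := Real.Gamma_pos_of_pos (show (0:ℝ) < 2 * n + 1 by positivity)
    positivity
  simp only [wW]
  set c0 := Real.Gamma (2 * n + 1) / (2 * Real.pi ^ (2 * n + 2))
  set Y : ℝ := ((2 * n + m + 2 * k + 1 : ℕ) : ℝ) with hY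
  have hYe : Y = 2 * n + m + 2 * k + 1 := by rw [hY]; push_cast; ring
  have hYpos : 0 < Y := by rw [hYe]; positivity
  have hT := tT_bound n k m hn (s ^ 2) (by positivity) (pow_le_one₀ h0 h1)
  rw [abs_mul, abs_mul, abs_mul, abs_mul, abs_of_pos hG, abs_of_pos (Real.exp_pos _),
    abs_of_nonneg (pow_nonneg h0 _), abs_of_nonneg (by positivity)]
  have e1 : 2 * (k:ℝ) + m + 2 * n + 1 = Y := by rw [hYe]; ring
  rw [e1]
  have hs : s ^ m ≤ 1 := pow_le_one₀ h0 h1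
  have hn' : (1:ℝ) ≤ n := by exact_mod_cast hn
  have hk0 : (0:ℝ) ≤ k := Nat.cast_nonneg _
  have hm0 : (0:ℝ) ≤ m := Nat.cast_nonneg _
  have hE : Real.exp (-(4 * (k : ℝ) * (k + m + 2 * n + 1) + 4 * n * m) * t) ≤
      Real.exp (-(Y * t)) ^ k * Real.exp (-(t * k ^ 2)) * Real.exp (-(4 * n * t * m)) := by
    rw [← Real.exp_nat_mul, ← Real.exp_add, ← Real.exp_add]
    apply Real.exp_le_exp.mpr
    have : (k:ℝ) * (Y * t) + t * k ^ 2 ≤ 4 * k * (k + m + 2 * n + 1) * t := by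
      rw [hYe]
      have : 0 ≤ k * t * (4 * (k + m + 2 * n + 1) - (2 * n + m + 2 * k + 1) - k) := by
        apply mul_nonneg (by positivity)
        nlinarith
      nlinarith
    nlinarith
  have hYk : Y ^ k * Real.exp (-(Y * t)) ^ k ≤ (1 / t) ^ k := by
    rw [← mul_pow]
    apply pow_le_pow_left₀ (by positivity)
    rw [Real.exp_neg, ← div_eq_mul_inv, div_le_div_iff₀ (Real.exp_pos _) ht]
    have := Real.add_one_le_exp (Y * t)
    linarith
  have hYb : Y ^ (2 * n + 1) ≤ (2 * n + 1) ^ (2 * n + 1) * (m + 1) ^ (2 * n + 1) * (k + 1) ^ (2 * n + 1) := by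
    rw [← mul_pow, ← mul_pow]
    apply pow_le_pow_left₀ hYpos.le
    rw [hYe]
    have : 0 ≤ (m:ℝ) * k := by positivity
    nlinarith [mul_nonneg (show (0:ℝ) ≤ n by positivity) this, mul_nonneg (show (0:ℝ) ≤ n by positivity) hm0,
      mul_le_mul_of_nonneg_right hn' hk0]
  calc c0 * Y * |tT n k m (s ^ 2)| * s ^ m * Real.exp (-(4 * (k : ℝ) * (k + m + 2 * n + 1) + 4 * n * m) * t)
      ≤ c0 * Y * (((k:ℝ) + 1) * (((m:ℝ) + 1) * Y ^ (2 * n + k))) * 1 *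
        (Real.exp (-(Y * t)) ^ k * Real.exp (-(t * k ^ 2)) * Real.exp (-(4 * n * t * m))) := by
        gcongr
    _ = c0 * (((k:ℝ) + 1) * ((m:ℝ) + 1)) * Y ^ (2 * n + 1) * (Y ^ k * Real.exp (-(Y * t)) ^ k) *
        (Real.exp (-(t * k ^ 2)) * Real.exp (-(4 * n * t * m))) := by ring
    _ ≤ c0 * (((k:ℝ) + 1) * ((m:ℝ) + 1)) *
        ((2 * n + 1) ^ (2 * n + 1) * (m + 1) ^ (2 * n + 1) * (k + 1) ^ (2 * n + 1)) * (1 / t) ^ k *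
        (Real.exp (-(t * k ^ 2)) * Real.exp (-(4 * n * t * m))) := by gcongr
    _ = _ := by ring

lemma fiber_sum (f : ℕ × ℕ → ℝ) (j : ℕ) :
    ∑' b : (fun p : ℕ × ℕ => 2 * p.2 + p.1) ⁻¹' {j}, f b =
      ∑ k ∈ Finset.range (j / 2 + 1), f (j - 2 * k, k) := by
  have hset : (fun p : ℕ × ℕ => 2 * p.2 + p.1) ⁻¹' {j} =
      (((Finset.range (j / 2 + 1)).image (fun k => (j - 2 * k, k)) : Finset (ℕ × ℕ)) : Set (ℕ × ℕ)) := by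
    ext ⟨m, k⟩
    simp only [Set.mem_preimage, Set.mem_singleton_iff, Finset.coe_image, Set.mem_image,
      Finset.coe_range, Set.mem_Iio, Prod.mk.injEq]
    constructor
    · intro h
      exact ⟨k, by omega, by omega, rfl⟩
    · rintro ⟨k', h1, h2, h3⟩
      omega
  rw [hset, Finset.tsum_subtype' , Finset.sum_image]
  intro a _ b _ h
  simp only [Prod.mk.injEq] at h
  exact h.2

lemma q_expand {n : ℕ} (hn : 1 ≤ n) {C : ℕ → ℝ → ℝ} (hC : IsGegenbauer n C) (t s y : ℝ)
    (ht : 0 < t) (h0 : 0 ≤ s) (h1 : s ≤ 1) (hy : 0 ≤ y) :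
    HasSum (fun p : ℕ × ℕ => wW n t s p * Real.exp (-((p.1:ℝ) * (p.1 + 2)) * t) *
        Real.sinh ((p.1 + 1) * y)) (Real.sinh y * qKernel n C t (s * Real.cosh y)) := by
  set f : ℕ × ℕ → ℝ := fun p => wW n t s p * Real.exp (-((p.1:ℝ) * (p.1 + 2)) * t) *
        Real.sinh ((p.1 + 1) * y) with hf
  have hsum : Summable f := by
    have hb := (wW_summable n hn t s ht h0 h1).mul_right (Real.exp (t + y ^ 2 / (4 * t)))
    refine Summable.of_norm_bounded hb ?_
    rintro ⟨m, k⟩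
    simp only [hf]
    rw [Real.norm_eq_abs, abs_mul, abs_mul, mul_assoc]
    apply mul_le_mul_of_nonneg_left _ (abs_nonneg _)
    rw [abs_of_pos (Real.exp_pos _), abs_of_nonneg (Real.sinh_nonneg_iff.mpr (by positivity))]
    have hs : Real.sinh ((m + 1) * y) ≤ Real.exp ((m + 1) * y) := by
      rw [Real.sinh_eq]
      have := Real.exp_pos (-((m + 1) * y))
      have := Real.exp_pos (((m:ℝ) + 1) * y)
      linarith
    refine (mul_le_mul_of_nonneg_left hs (Real.exp_pos _).le).trans ?_
    rw [← Real.exp_add]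
    apply Real.exp_le_exp.mpr
    have : 0 ≤ (2 * t * (m + 1) - y) ^ 2 / (4 * t) := by positivity
    have e : (2 * t * (m + 1) - y) ^ 2 / (4 * t) = t * (m + 1) ^ 2 - (m + 1) * y + y ^ 2 / (4 * t) := by
      field_simp
      ring
    nlinarith
  have h := hsum.hasSum.tsum_fiberwise (fun p : ℕ × ℕ => 2 * p.2 + p.1)
  have hval : Real.sinh y * qKernel n C t (s * Real.cosh y) = ∑' p, f p := by
    rw [← h.tsum_eq, qKernel, ← tsum_mul_left, ← tsum_mul_left]
    congr 1
    funext j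
    rw [fiber_sum]
    have hd := sinh_decomp hC j s y
    calc _ = (Real.Gamma (2 * n + 1) / (2 * Real.pi ^ (2 * n + 2))) * (((j : ℝ) + 2 * n + 1) *
          Real.exp (-((j : ℝ) * (j + 4 * n + 2)) * t)) * (Real.sinh y * C j (s * Real.cosh y)) := by ring
      _ = _ := by
        rw [hd, Finset.mul_sum]
        apply Finset.sum_congr rfl
        intro k hk
        obtain ⟨m, rfl⟩ := Nat.exists_eq_add_of_le (show 2 * k ≤ j by simp at hk; omega)
        rw [show 2 * k + m - 2 * k = m by omega]
        simp only [hf, wW]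
        have he : Real.exp (-(((2 * k + m : ℕ) : ℝ) * ((2 * k + m : ℕ) + 4 * n + 2)) * t) =
          Real.exp (-(4 * (k : ℝ) * (k + m + 2 * n + 1) + 4 * n * m) * t) *
            Real.exp (-((m:ℝ) * (m + 2)) * t) := by
          rw [← Real.exp_add]; congr 1; push_cast; ring
        rw [he]
        push_cast
        ring
  rw [hval]
  exact hsum.hasSum

lemma inner_int {n : ℕ} (hn : 1 ≤ n) {C : ℕ → ℝ → ℝ} (hC : IsGegenbauer n C) (t s u : ℝ)
    (ht : 0 < t) (h0 : 0 ≤ s) (h1 : s ≤ 1) (hu : 0 < Real.sin u) :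
    ∫ y in Set.Ioi (0 : ℝ), (Real.sinh y * Real.sin (y * u / (2 * t)) / Real.sin u) *
        Real.exp (-(y ^ 2 - u ^ 2) / (4 * t)) * qKernel n C t (s * Real.cosh y) =
      ∑' p : ℕ × ℕ, wW n t s p * (Real.sqrt (π * t) * Real.exp t) * gG p.1 0 (Real.cos u) := by
  let F : ℕ × ℕ → ℝ → ℝ := fun p y =>
    (wW n t s p * Real.exp (-((p.1:ℝ) * (p.1 + 2)) * t) * (Real.exp (u ^ 2 / (4 * t)) / Real.sin u)) *
      (Real.sinh ((p.1 + 1) * y) * Real.sin (u / (2 * t) * y) * Real.exp (-y ^ 2 / (4 * t)))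
  have hbd : ∀ p : ℕ × ℕ, ∀ y ∈ Set.Ioi (0:ℝ), ‖F p y‖ ≤
      (|wW n t s p| * Real.exp (-((p.1:ℝ) * (p.1 + 2)) * t) * (Real.exp (u ^ 2 / (4 * t)) / Real.sin u)) *
      Real.exp ((p.1 + 1) * y - y ^ 2 / (4 * t)) := by
    rintro ⟨m, k⟩ y hy
    have hy : 0 < y := hy
    simp only [F]
    have hs : Real.sinh ((m + 1) * y) ≤ Real.exp ((m + 1) * y) := by
      rw [Real.sinh_eq]
      have := Real.exp_pos (-((m + 1) * y))
      have := Real.exp_pos (((m:ℝ) + 1) * y)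
      linarith
    rw [Real.norm_eq_abs, abs_mul, abs_mul (wW n t s (m, k) * _), abs_mul (wW n t s (m, k)),
      abs_of_pos (Real.exp_pos _), abs_of_pos (div_pos (Real.exp_pos _) hu)]
    apply mul_le_mul_of_nonneg_left _ (by positivity)
    rw [abs_mul, abs_mul, abs_of_pos (Real.exp_pos _),
      abs_of_nonneg (Real.sinh_nonneg_iff.mpr (by positivity)), sub_eq_add_neg, Real.exp_add, neg_div]
    apply mul_le_mul_of_nonneg_right _ (Real.exp_pos _).le
    calc Real.sinh ((m + 1) * y) * |Real.sin (u / (2 * t) * y)| ≤ Real.exp ((m + 1) * y) * 1 := by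
          gcongr
          exact Real.abs_sin_le_one _
      _ = _ := mul_one _
  have hdomI : ∀ p : ℕ × ℕ, Integrable (fun y : ℝ =>
      (|wW n t s p| * Real.exp (-((p.1:ℝ) * (p.1 + 2)) * t) * (Real.exp (u ^ 2 / (4 * t)) / Real.sin u)) *
      Real.exp ((p.1 + 1) * y - y ^ 2 / (4 * t))) := fun p =>
    (gauss_real ((p.1:ℝ) + 1) t ht).1.const_mul _
  have hFI : ∀ p, Integrable (F p) (volume.restrict (Set.Ioi (0:ℝ))) := by
    intro p
    refine Integrable.mono' (hdomI p).integrableOn ?_ ?_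
    · apply Continuous.aestronglyMeasurable
      simp only [F]
      fun_prop
    · exact (ae_restrict_iff' measurableSet_Ioi).mpr (Eventually.of_forall (hbd p))
  have hFsum : Summable fun p => ∫ y in Set.Ioi (0:ℝ), ‖F p y‖ := by
    have hb := (wW_summable n hn t s ht h0 h1).mul_right
      (Real.exp (u ^ 2 / (4 * t)) / Real.sin u * (Real.sqrt (4 * π * t) * Real.exp t))
    refine Summable.of_nonneg_of_le (fun p => integral_nonneg (fun _ => norm_nonneg _)) ?_ hb
    intro p
    calc ∫ y in Set.Ioi (0:ℝ), ‖F p y‖ ≤ ∫ y in Set.Ioi (0:ℝ),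
        (|wW n t s p| * Real.exp (-((p.1:ℝ) * (p.1 + 2)) * t) * (Real.exp (u ^ 2 / (4 * t)) / Real.sin u)) *
      Real.exp ((p.1 + 1) * y - y ^ 2 / (4 * t)) :=
          setIntegral_mono_on (hFI p).norm (hdomI p).integrableOn measurableSet_Ioi (hbd p)
      _ ≤ ∫ y, (|wW n t s p| * Real.exp (-((p.1:ℝ) * (p.1 + 2)) * t) * (Real.exp (u ^ 2 / (4 * t)) / Real.sin u)) *
      Real.exp ((p.1 + 1) * y - y ^ 2 / (4 * t)) := by
          apply setIntegral_le_integral (hdomI p)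
          exact Eventually.of_forall (fun y => by simp only [Pi.zero_apply]; positivity)
      _ = _ := by
        rw [integral_const_mul, (gauss_real ((p.1:ℝ) + 1) t ht).2]
        have he : Real.exp t = Real.exp (-((p.1:ℝ) * (p.1 + 2)) * t) * Real.exp (t * ((p.1:ℝ) + 1) ^ 2) := by
          rw [← Real.exp_add]; congr 1; ring
        rw [he]; ring
  have hmain := (hasSum_integral_of_summable_integral_norm hFI hFsum).tsum_eq
  have hL : ∫ y in Set.Ioi (0 : ℝ), (Real.sinh y * Real.sin (y * u / (2 * t)) / Real.sin u) *
        Real.exp (-(y ^ 2 - u ^ 2) / (4 * t)) * qKernel n C t (s * Real.cosh y) =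
      ∫ y in Set.Ioi (0 : ℝ), ∑' p, F p y := by
    apply setIntegral_congr_fun measurableSet_Ioi
    intro y hy
    have hy : 0 < y := hy
    have hq := (q_expand hn hC t s y ht h0 h1 hy.le).mul_right
      (Real.sin (y * u / (2 * t)) / Real.sin u * Real.exp (-(y ^ 2 - u ^ 2) / (4 * t)))
    have e : ∀ p, F p y = wW n t s p * Real.exp (-((p.1:ℝ) * (p.1 + 2)) * t) *
        Real.sinh ((p.1 + 1) * y) *
        (Real.sin (y * u / (2 * t)) / Real.sin u * Real.exp (-(y ^ 2 - u ^ 2) / (4 * t))) := by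
      intro p
      simp only [F]
      rw [show -(y ^ 2 - u ^ 2) / (4 * t) = u ^ 2 / (4 * t) + -y ^ 2 / (4 * t) by ring, Real.exp_add,
        show y * u / (2 * t) = u / (2 * t) * y by ring]
      ring
    simp only [e]
    rw [hq.tsum_eq]
    ring
  rw [hL, ← hmain]
  congr 1
  funext p
  simp only [F]
  rw [integral_const_mul, gauss_half _ _ _ ht]
  have e1 : 2 * ((p.1:ℝ) + 1) * (u / (2 * t)) * t = (p.1 + 1) * u := by field_simp
  rw [e1, sin_eq_gG]
  have he : Real.exp t = Real.exp (-((p.1:ℝ) * (p.1 + 2)) * t) * Real.exp (u ^ 2 / (4 * t)) *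
      Real.exp (t * (((p.1:ℝ) + 1) ^ 2 - (u / (2 * t)) ^ 2)) := by
    rw [← Real.exp_add, ← Real.exp_add]; congr 1; field_simp; ring
  rw [he]
  field_simp

lemma gG_continuous (m : ℕ) : Continuous (gG m 0) := by
  unfold gG; fun_prop

lemma outer_int {n : ℕ} (hn : 1 ≤ n) {J : ℕ → ℕ → ℕ → ℝ → ℝ} (hJ : IsJacobi J) (t s a K : ℝ)
    (ht : 0 < t) (h0 : 0 ≤ s) (h1 : s ≤ 1) (ha0 : 0 < a) (ha : a ≤ π / 2) :
    ∫ θ in (0:ℝ)..π, ∑' p : ℕ × ℕ, wW n t s p * K * gG p.1 0 (Real.cos a * Real.cos θ) =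
      ∑' p : ℕ × ℕ, wW n t s (2 * p.1, p.2) * K * (π * J p.1 0 0 (Real.cos (2 * a))) := by
  have hsina : 0 < Real.sin a := Real.sin_pos_of_pos_of_lt_pi ha0 (by linarith [Real.pi_pos])
  have hgb : ∀ m θ, |gG m 0 (Real.cos a * Real.cos θ)| ≤ 1 / Real.sin a := by
    intro m θ
    set x := Real.cos a * Real.cos θ
    have hx2 : x ^ 2 ≤ Real.cos a ^ 2 := by
      simp only [x]; rw [mul_pow]
      nlinarith [sq_nonneg (Real.cos a), Real.cos_sq_le_one θ]
    have hx : |x| ≤ 1 := by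
      rw [← sq_le_one_iff_abs_le_one]; exact hx2.trans (Real.cos_sq_le_one a)
    have hcos : Real.cos (Real.arccos x) = x := Real.cos_arccos (abs_le.mp hx).1 (abs_le.mp hx).2
    have hsin : Real.sin a ≤ Real.sin (Real.arccos x) := by
      rw [Real.sin_arccos]
      apply Real.le_sqrt_of_sq_le
      rw [Real.sin_sq]; linarith
    have h := sin_eq_gG m (Real.arccos x)
    rw [hcos] at h
    rw [le_div_iff₀ hsina]
    calc |gG m 0 x| * Real.sin a ≤ |gG m 0 x| * Real.sin (Real.arccos x) := by gcongr
      _ = |Real.sin ((m + 1) * Real.arccos x)| := by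
        rw [h, abs_mul, abs_of_nonneg (hsina.le.trans hsin)]
      _ ≤ 1 := Real.abs_sin_le_one _
  have hW := wW_summable n hn t s ht h0 h1
  have hWb := hW.mul_right (|K| * (1 / Real.sin a))
  have hb : ∀ p : ℕ × ℕ, ∀ θ, ‖wW n t s p * K * gG p.1 0 (Real.cos a * Real.cos θ)‖ ≤
      |wW n t s p| * (|K| * (1 / Real.sin a)) := by
    intro p θ
    rw [Real.norm_eq_abs, abs_mul, abs_mul, mul_assoc]
    gcongr
    exact hgb _ _
  have hmain := intervalIntegral.hasSum_integral_of_dominated_convergence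
    (μ := volume) (a := 0) (b := π)
    (F := fun p θ => wW n t s p * K * gG p.1 0 (Real.cos a * Real.cos θ))
    (f := fun θ => ∑' p : ℕ × ℕ, wW n t s p * K * gG p.1 0 (Real.cos a * Real.cos θ))
    (fun p _ => |wW n t s p| * (|K| * (1 / Real.sin a)))
    (fun p => by
      apply Continuous.aestronglyMeasurable
      have := gG_continuous p.1
      fun_prop)
    (fun p => Eventually.of_forall (fun θ _ => hb p θ))
    (Eventually.of_forall (fun θ _ => hWb))
    (by simp)
    (Eventually.of_forall (fun θ _ => (Summable.of_norm_bounded hWb (fun p => hb p θ)).hasSum))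
  rw [← hmain.tsum_eq]
  have hinj : Function.Injective (fun p : ℕ × ℕ => (2 * p.1, p.2)) := by
    rintro ⟨a1, a2⟩ ⟨b1, b2⟩ h
    simp only [Prod.mk.injEq] at h ⊢
    omega
  rw [← hinj.tsum_eq]
  · congr 1
    funext p
    rw [intervalIntegral.integral_const_mul, int_gG_even hJ, Real.cos_two_mul]
  · rintro ⟨m, k⟩ h
    rcases Nat.even_or_odd' m with ⟨l, rfl | rfl⟩
    · exact ⟨(l, k), rfl⟩
    · exfalso
      apply h
      simp only
      rw [intervalIntegral.integral_const_mul, int_gG_odd, mul_zero]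

lemma term_eq {n : ℕ} (hn : 1 ≤ n) {J : ℕ → ℕ → ℕ → ℝ → ℝ} (hJ : IsJacobi J) (t r a : ℝ)
    (p : ℕ × ℕ) : hTerm n J t r a p =
      wW n t (Real.cos r) (2 * p.1, p.2) * (1 / 2 * J p.1 0 0 (Real.cos (2 * a))) := by
  unfold hTerm wW
  simp only
  rw [tT_eq hJ n hn, ← Real.cos_two_mul]
  have hn0 : (n:ℝ) ≠ 0 := by positivity
  have hG : Real.Gamma (2 * n + 1) = 2 * n * Real.Gamma (2 * n) :=
    Real.Gamma_add_one (by positivity)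
  rw [hG]
  have he : Real.exp (-(4 * (p.2 : ℝ) * (p.2 + 2 * n + 2 * p.1 + 1) + 8 * n * p.1) * t) =
      Real.exp (-(4 * (p.2 : ℝ) * (p.2 + (2 * p.1 : ℕ) + 2 * n + 1) + 4 * n * (2 * p.1 : ℕ)) * t) := by
    congr 1; push_cast; ring
  rw [he]
  push_cast
  field_simp
  ring

end

/-- integral representation of the subelliptic heat kernel on `CP^{2n+1}` in
terms of the Riemannian heat kernel of `S^{4n+3}`. -/
theorem stmt_16 (n : ℕ) (hn : 1 ≤ n) (J : ℕ → ℕ → ℕ → ℝ → ℝ) (hJ : IsJacobi J)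
    (C : ℕ → ℝ → ℝ) (hC : IsGegenbauer n C)
    (t r φ : ℝ) (ht : 0 < t) (hr : r ∈ Set.Ico 0 (π / 2)) (hφ : φ ∈ Set.Ioc 0 (π / 2)) :
    hKernel n J t r φ =
      (Real.exp (-t) / (2 * π * Real.sqrt (π * t))) *
        ∫ θ in (0:ℝ)..π, ∫ y in Set.Ioi (0 : ℝ),
          (Real.sinh y *
              Real.sin (y * Real.arccos (Real.cos φ * Real.cos θ) / (2 * t)) /
              Real.sqrt (1 - Real.cos φ ^ 2 * Real.cos θ ^ 2)) *
            Real.exp (-(y ^ 2 - Real.arccos (Real.cos φ * Real.cos θ) ^ 2) / (4 * t)) *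
            qKernel n C t (Real.cos r * Real.cosh y) := by
  have hr0 : 0 ≤ Real.cos r :=
    Real.cos_nonneg_of_neg_pi_div_two_le_of_le (by linarith [hr.1, Real.pi_pos]) hr.2.le
  have hsinφ : 0 < Real.sin φ :=
    Real.sin_pos_of_pos_of_lt_pi hφ.1 (by linarith [Real.pi_pos, hφ.2])
  have hin : ∀ θ : ℝ, ∫ y in Set.Ioi (0 : ℝ),
          (Real.sinh y *
              Real.sin (y * Real.arccos (Real.cos φ * Real.cos θ) / (2 * t)) /
              Real.sqrt (1 - Real.cos φ ^ 2 * Real.cos θ ^ 2)) *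
            Real.exp (-(y ^ 2 - Real.arccos (Real.cos φ * Real.cos θ) ^ 2) / (4 * t)) *
            qKernel n C t (Real.cos r * Real.cosh y) =
      ∑' p : ℕ × ℕ, wW n t (Real.cos r) p * (Real.sqrt (π * t) * Real.exp t) *
        gG p.1 0 (Real.cos φ * Real.cos θ) := by
    intro θ
    have hx2 : (Real.cos φ * Real.cos θ) ^ 2 ≤ Real.cos φ ^ 2 := by
      rw [mul_pow]
      nlinarith [sq_nonneg (Real.cos φ), Real.cos_sq_le_one θ]
    have hx : |Real.cos φ * Real.cos θ| ≤ 1 := by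
      rw [← sq_le_one_iff_abs_le_one]; exact hx2.trans (Real.cos_sq_le_one φ)
    have hcos := Real.cos_arccos (abs_le.mp hx).1 (abs_le.mp hx).2
    have hs : Real.sin (Real.arccos (Real.cos φ * Real.cos θ)) =
        Real.sqrt (1 - Real.cos φ ^ 2 * Real.cos θ ^ 2) := by
      rw [Real.sin_arccos, mul_pow]
    have hpos : 0 < Real.sin (Real.arccos (Real.cos φ * Real.cos θ)) := by
      rw [Real.sin_arccos]
      apply Real.sqrt_pos.mpr
      have := Real.sin_sq_add_cos_sq φ
      nlinarith
    have h := inner_int hn hC t (Real.cos r) (Real.arccos (Real.cos φ * Real.cos θ)) ht hr0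
      (Real.cos_le_one r) hpos
    rw [hs, hcos] at h
    exact h
  simp only [hin]
  rw [outer_int hn hJ t (Real.cos r) φ _ ht hr0 (Real.cos_le_one r) hφ.1 hφ.2, hKernel,
    ← tsum_mul_left]
  congr 1
  funext p
  rw [term_eq hn hJ]
  have h1 : Real.sqrt (π * t) ≠ 0 := (Real.sqrt_pos.mpr (by positivity)).ne'
  have h2 : Real.exp (-t) * Real.exp t = 1 := by rw [← Real.exp_add]; simp
  field_simp
  linear_combination (-(wW n t (Real.cos r) (2 * p.1, p.2) * J p.1 0 0 (Real.cos (2 * φ)))) * h2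
end
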